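/- arXiv:1907.00925 — 3 statements merged into one kernel-verified Lean document; each statement's English description precedes it below -/
import Mathlib

section
/- Schottky's theorem in the ball: for every M > 0 and r ∈ (0,1) there exists a constant C = C(M, r) > 0 such that every holomorphic function f on the unit ball B(0,1) ⊂ ℂⁿ omitting the values 0 and 1 and satisfying |f(0)| ≤ M satisfies |f(z)| ≤ C for all z with |z| ≤ r. -/
open Filter Topology

abbrev Cn (n : ℕ) := EuclideanSpace ℂ (Fin n)

/-- Chordal (spherical) distance between two finite points of the Riemann sphere. -/
noncomputable def chordal (a b : ℂ) : ℝ :=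
  dist a b / (Real.sqrt (1 + ‖a‖^2) * Real.sqrt (1 + ‖b‖^2))

/-- Chordal distance between a finite point and ∞. -/
noncomputable def chordalInf (a : ℂ) : ℝ := 1 / Real.sqrt (1 + ‖a‖^2)

/-- Spherical derivative of a holomorphic function of several complex variables. -/
noncomputable def sphDeriv {E : Type} [NormedAddCommGroup E] [NormedSpace ℂ E]
    (f : E → ℂ) (z : E) : ℝ := ‖fderiv ℂ f z‖ / (1 + ‖f z‖^2)

/-- A family `F` of (holomorphic) functions is normal on `Ω`: every sequence from `F`
has a subsequence which converges uniformly on compact subsets of `Ω` in the spherical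
metric, either to a holomorphic function or to ∞. -/
def IsNormalFamily {E : Type} [NormedAddCommGroup E] [NormedSpace ℂ E]
    (Ω : Set E) (F : Set (E → ℂ)) : Prop :=
  ∀ s : ℕ → E → ℂ, (∀ j, s j ∈ F) →
    ∃ φ : ℕ → ℕ, StrictMono φ ∧
      ((∃ g : E → ℂ, DifferentiableOn ℂ g Ω ∧
          ∀ K, K ⊆ Ω → IsCompact K → ∀ ε > 0, ∃ N, ∀ j ≥ N, ∀ z ∈ K,
            chordal (s (φ j) z) (g z) < ε) ∨
        (∀ K, K ⊆ Ω → IsCompact K → ∀ M : ℝ, ∃ N, ∀ j ≥ N, ∀ z ∈ K, M < ‖s (φ j) z‖))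

section
open Metric Set

theorem sch_log {F : ℂ → ℂ} (hF : DifferentiableOn ℂ F (ball 0 1))
    (h0 : ∀ z ∈ ball (0:ℂ) 1, F z ≠ 0) :
    ∃ L : ℂ → ℂ, DifferentiableOn ℂ L (ball 0 1) ∧ ∀ z ∈ ball (0:ℂ) 1, Complex.exp (L z) = F z := by
  have hq : DifferentiableOn ℂ (fun z => deriv F z / F z) (ball 0 1) :=
    (hF.deriv isOpen_ball).div hF h0
  obtain ⟨h, hh⟩ := hq.isExactOn_ball
  have h00 : (0:ℂ) ∈ ball (0:ℂ) 1 := by simp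
  have key : ∀ z ∈ ball (0:ℂ) 1, HasDerivAt (fun z => F z * Complex.exp (-h z)) 0 z := by
    intro z hz
    have h1 := (hF.differentiableAt (isOpen_ball.mem_nhds hz)).hasDerivAt
    have h2 := (hh z hz).neg.cexp
    refine (h1.mul h2).congr_deriv ?_
    have := h0 z hz
    field_simp
    simp
  have hc : ∀ z ∈ ball (0:ℂ) 1, F z * Complex.exp (-h z) = F 0 * Complex.exp (-h 0) := by
    intro z hz
    have := (convex_ball (0:ℂ) 1).norm_image_sub_le_of_norm_hasDerivWithin_le (C := 0)
      (fun x hx => (key x hx).hasDerivWithinAt) (by simp) h00 hz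
    simpa [sub_eq_zero] using this
  refine ⟨fun z => h z - h 0 + Complex.log (F 0), ?_, ?_⟩
  · intro z hz
    exact (((hh z hz).differentiableAt.sub_const _).add_const _).differentiableWithinAt
  · intro z hz
    rw [Complex.exp_add, Complex.exp_log (h0 0 h00), Complex.exp_sub]
    have := hc z hz
    rw [Complex.exp_neg, Complex.exp_neg] at this
    have e1 := Complex.exp_ne_zero (h z)
    have e2 := Complex.exp_ne_zero (h 0)
    field_simp at this ⊢
    linear_combination -this

theorem sch_norm_cos (w : ℂ) : |w.im| ≤ ‖Complex.cos w‖ := by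
  have h1 : Real.sinh |w.im| ≤ ‖Complex.cos w‖ := by
    have h2 : ‖Complex.cos w‖ = ‖Complex.exp (w * Complex.I) + Complex.exp (-w * Complex.I)‖ / 2 := by
      rw [Complex.cos]; simp
    have ha : ‖Complex.exp (w * Complex.I)‖ = Real.exp (-w.im) := by simp [Complex.norm_exp]
    have hb : ‖Complex.exp (-w * Complex.I)‖ = Real.exp (w.im) := by simp [Complex.norm_exp]
    have h3 := norm_sub_le_norm_add (Complex.exp (w * Complex.I)) (Complex.exp (-w * Complex.I))
    have h4 := norm_sub_le_norm_add (Complex.exp (-w * Complex.I)) (Complex.exp (w * Complex.I))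
    rw [add_comm] at h4
    rw [ha, hb] at h3 h4
    rw [h2, Real.sinh_eq]
    rcases abs_cases w.im with ⟨h, _⟩ | ⟨h, _⟩ <;> rw [h]
    · linarith
    · rw [neg_neg]; linarith
  exact (Real.self_le_sinh_iff.2 (abs_nonneg _)).trans h1

theorem sch_cos {F : ℂ → ℂ} (hF : DifferentiableOn ℂ F (ball 0 1))
    (h0 : ∀ z ∈ ball (0:ℂ) 1, F z ≠ 1 ∧ F z ≠ -1) :
    ∃ G : ℂ → ℂ, DifferentiableOn ℂ G (ball 0 1) ∧
      (∀ z ∈ ball (0:ℂ) 1, Complex.cos (Real.pi * G z) = F z) ∧ ‖G 0‖ ≤ 1 + ‖F 0‖ := by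
  have h00 : (0:ℂ) ∈ ball (0:ℂ) 1 := by simp
  have hpi : (Real.pi : ℂ) ≠ 0 := by exact_mod_cast Real.pi_ne_zero
  obtain ⟨L, hL, hLe⟩ := sch_log (F := fun z => F z ^ 2 - 1) ((hF.pow 2).sub_const 1) (by
    intro z hz h
    have : (F z - 1) * (F z + 1) = 0 := by linear_combination h
    rcases mul_eq_zero.1 this with h | h
    · exact (h0 z hz).1 (by linear_combination h)
    · exact (h0 z hz).2 (by linear_combination h))
  have hs : ∀ z ∈ ball (0:ℂ) 1, Complex.exp (L z / 2) ^ 2 = F z ^ 2 - 1 := by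
    intro z hz
    rw [← Complex.exp_nat_mul, ← hLe z hz]; congr 1; push_cast; ring
  have hp : ∀ z ∈ ball (0:ℂ) 1,
      (F z + Complex.exp (L z / 2)) * (F z - Complex.exp (L z / 2)) = 1 := by
    intro z hz
    linear_combination -hs z hz
  obtain ⟨K, hK, hKe⟩ := sch_log (F := fun z => F z + Complex.exp (L z / 2))
    (hF.add (hL.div_const 2).cexp) (by
    intro z hz h
    have := hp z hz
    rw [show F z + Complex.exp (L z / 2) = 0 from h] at this
    simp at this)
  have hc : ∀ z ∈ ball (0:ℂ) 1, Complex.cos (K z / Complex.I) = F z := by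
    intro z hz
    have e1 : K z / Complex.I * Complex.I = K z := by field_simp
    have e2 : -(K z / Complex.I) * Complex.I = - K z := by field_simp
    have e3 : Complex.exp (-K z) = F z - Complex.exp (L z / 2) := by
      rw [Complex.exp_neg, hKe z hz]
      exact inv_eq_of_mul_eq_one_right (hp z hz)
    rw [Complex.cos, e1, e2, e3, hKe z hz]
    ring
  set a : ℂ := K 0 / Complex.I / Real.pi with ha
  set k : ℤ := round (a.re / 2) with hk
  have hc2 : ∀ z ∈ ball (0:ℂ) 1,
      Complex.cos (Real.pi * (K z / Complex.I / Real.pi - 2 * k)) = F z := by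
    intro z hz
    rw [← hc z hz, ← Complex.cos_sub_int_mul_two_pi (K z / Complex.I) k]
    congr 1; field_simp
  refine ⟨fun z => K z / Complex.I / Real.pi - 2 * k, ?_, hc2, ?_⟩
  · exact (((hK.div_const _).div_const _).sub_const _)
  · have h1 := sch_norm_cos (Real.pi * (K 0 / Complex.I / Real.pi - 2 * k))
    rw [hc2 0 h00] at h1
    change ‖a - 2 * k‖ ≤ _
    rw [← ha] at h1
    have h2 := Complex.norm_le_abs_re_add_abs_im (a - 2 * k)
    have h3 : |(a - 2 * k).re| ≤ 1 := by
      have := abs_sub_round (a.re / 2)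
      have e : (a - 2 * k).re = 2 * (a.re / 2 - k) := by simp; ring
      rw [e, abs_mul, abs_two]; linarith
    have h4 : |(a - 2 * k).im| ≤ ‖F 0‖ := by
      refine le_trans ?_ h1
      rw [Complex.im_ofReal_mul, abs_mul, abs_of_pos Real.pi_pos]
      exact le_mul_of_one_le_left (abs_nonneg _) (by linarith [Real.pi_gt_three])
    linarith

theorem sch_cosh (y : ℝ) : ∃ s : ℝ, |s - y| ≤ 1 / 2 ∧ ∃ n : ℤ, Real.cosh (Real.pi * s) = n := by
  wlog hy : 0 ≤ y generalizing y
  · obtain ⟨s, hs, n, hn⟩ := this (-y) (by linarith)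
    refine ⟨-s, ?_, n, ?_⟩
    · rw [← abs_neg]; convert hs using 2; ring
    · rw [mul_neg, Real.cosh_neg, hn]
  have hpi := Real.pi_gt_three
  have h2 : 2 ≤ Real.cosh (Real.pi / 2) := by
    have e : Real.pi / 2 = 2 * (Real.pi / 4) := by ring
    rw [e, Real.cosh_two_mul, Real.cosh_sq]
    have := Real.self_le_sinh_iff.2 (show 0 ≤ Real.pi / 4 by positivity)
    nlinarith
  have h3 : Real.cosh (Real.pi * y) + 1 ≤ Real.cosh (Real.pi * (y + 1/2)) := by
    have e : Real.pi * (y + 1/2) = Real.pi * y + Real.pi / 2 := by ring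
    rw [e, Real.cosh_add]
    have a1 := Real.one_le_cosh (Real.pi * y)
    have a2 : 0 ≤ Real.sinh (Real.pi * y) := Real.sinh_nonneg_iff.2 (by positivity)
    have a3 : 0 ≤ Real.sinh (Real.pi / 2) := Real.sinh_nonneg_iff.2 (by positivity)
    nlinarith [mul_nonneg a2 a3]
  have hcont : ContinuousOn (fun s => Real.cosh (Real.pi * s)) (Icc y (y + 1/2)) := by
    fun_prop
  obtain ⟨s, hs, hse⟩ := intermediate_value_Icc (by linarith) hcont
    (show ((⌈Real.cosh (Real.pi * y)⌉ : ℤ) : ℝ) ∈ _ from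
      ⟨Int.le_ceil _, (Int.ceil_lt_add_one _).le.trans h3⟩)
  exact ⟨s, by rw [abs_of_nonneg] <;> linarith [hs.1, hs.2], _, hse⟩

theorem sch_cosint (n : ℤ) :
    Complex.cos (n * Real.pi) = 1 ∨ Complex.cos (n * Real.pi) = -1 := by
  have h := Real.cos_int_mul_pi n
  have h2 : Complex.cos (n * Real.pi) = ((Real.cos (n * Real.pi) : ℝ) : ℂ) := by push_cast; rfl
  rw [h2, h]
  rcases Int.even_or_odd n with h | h
  · left; rw [h.neg_one_zpow]; simp
  · right; rw [h.neg_one_zpow]; simp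

theorem sch_lattice (w : ℂ) : ∃ p : ℂ, ‖p - w‖ ≤ 1 ∧ ∃ n : ℤ, Complex.cos (Real.pi * p) = n := by
  obtain ⟨s, hs, n, hn⟩ := sch_cosh w.im
  refine ⟨round w.re + s * Complex.I, ?_, ?_⟩
  · have h2 := Complex.norm_le_abs_re_add_abs_im (round w.re + s * Complex.I - w)
    have h3 := abs_sub_round w.re
    rw [abs_sub_comm] at h3
    simp at h2
    linarith
  · have e : (Real.pi : ℂ) * (round w.re + s * Complex.I)
      = (round w.re : ℤ) * Real.pi + ((Real.pi * s : ℝ) : ℂ) * Complex.I := by push_cast; ring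
    rw [e, Complex.cos_add, Complex.sin_int_mul_pi, Complex.cos_mul_I, ← Complex.ofReal_cosh, hn]
    rcases sch_cosint (round w.re) with h | h <;> rw [h]
    · exact ⟨n, by simp⟩
    · exact ⟨-n, by simp⟩

theorem sch_bloch1 {g : ℂ → ℂ} {a : ℂ} {r : ℝ} (hr : 0 < r)
    (hg : DifferentiableOn ℂ g (ball a r)) (hd : deriv g a ≠ 0)
    (hb : ∀ z ∈ ball a r, ‖deriv g z‖ ≤ 2 * ‖deriv g a‖) :
    closedBall (g a) (‖deriv g a‖ * r / 24) ⊆ g '' ball a r := by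
  have hm : MapsTo (deriv g) (ball a r) (closedBall (deriv g a) (3 * ‖deriv g a‖)) := by
    intro z hz
    rw [mem_closedBall, dist_eq_norm]
    linarith [norm_sub_le (deriv g z) (deriv g a), hb z hz]
  set c : NNReal := ‖deriv g a‖₊ / 2 with hc
  have hsub : closedBall a (r / 12) ⊆ ball a (r / 6) := closedBall_subset_ball (by linarith)
  have hsub2 : ball a (r / 6) ⊆ ball a r := ball_subset_ball (by linarith)
  set e : ℂ →L[ℂ] ℂ := ContinuousLinearMap.toSpanSingleton ℂ (deriv g a) with he
  have hA : ApproximatesLinearOn g e (ball a (r / 6)) c := by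
    intro x hx y hy
    refine (convex_ball a (r / 6)).norm_image_sub_le_of_norm_fderiv_le' (𝕜 := ℂ)
      (fun z hz => hg.differentiableAt (isOpen_ball.mem_nhds (hsub2 hz))) ?_ hy hx
    intro z hz
    have h1 := Complex.dist_le_div_mul_dist_of_mapsTo_ball (hg.deriv isOpen_ball) hm (hsub2 hz)
    have h2 : fderiv ℂ g z - e = ContinuousLinearMap.toSpanSingleton ℂ (deriv g z - deriv g a) := by
      ext; simp [he]
    rw [h2, ContinuousLinearMap.norm_toSpanSingleton, ← dist_eq_norm]
    refine h1.trans ?_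
    have h3 : dist z a ≤ r / 6 := (mem_ball.1 hz).le
    calc 3 * ‖deriv g a‖ / r * dist z a ≤ 3 * ‖deriv g a‖ / r * (r / 6) := by gcongr
      _ = c := by rw [hc]; push_cast; field_simp; norm_num
  let R : e.NonlinearRightInverse :=
    { toFun := fun y => y / deriv g a
      nnnorm := ‖deriv g a‖₊⁻¹
      bound' := by intro y; simp [div_eq_inv_mul]
      right_inv' := by intro y; simp [he, hd] }
  have := hA.surjOn_closedBall_of_nonlinearRightInverse R (ε := r / 12) (by positivity) hsub
  have hrad : (((R.nnnorm : ℝ)⁻¹ - c) * (r / 12)) = ‖deriv g a‖ * r / 24 := by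
    simp only [R, hc]; push_cast; rw [inv_inv]; ring
  rw [hrad] at this
  exact this.trans (image_mono (hsub.trans hsub2))

theorem sch_bloch {g : ℂ → ℂ} {a : ℂ} {R : ℝ} (hR : 0 < R)
    (hg : DifferentiableOn ℂ g (ball a (2 * R)))
    (hno : ∀ w : ℂ, ∃ p, ‖p - w‖ ≤ 1 ∧ p ∉ g '' ball a (2 * R)) :
    ‖deriv g a‖ ≤ 48 / R := by
  by_contra! hlt
  have hdc : ContinuousOn (deriv g) (ball a (2 * R)) := (hg.deriv isOpen_ball).continuousOn
  have hss : closedBall a R ⊆ ball a (2 * R) := closedBall_subset_ball (by linarith)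
  obtain ⟨w, hw, hmax⟩ := (isCompact_closedBall a R).exists_isMaxOn ⟨a, by simp [hR.le]⟩
    (f := fun z => ‖deriv g z‖ * (R - dist z a))
    ((hdc.mono hss).norm.mul (by fun_prop))
  have h1 : 48 < ‖deriv g w‖ * (R - dist w a) := by
    have := hmax (show a ∈ closedBall a R by simp [hR.le])
    simp at this
    rw [div_lt_iff₀ hR] at hlt
    linarith
  have hw' : dist w a ≤ R := hw
  set t := R - dist w a with ht
  have htp : 0 < t := by
    by_contra! h
    nlinarith [norm_nonneg (deriv g w)]
  have hdw : deriv g w ≠ 0 := by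
    intro h; rw [h] at h1; simp at h1; linarith
  have hsb : ball w (t / 2) ⊆ closedBall a R := by
    intro z hz
    have := dist_triangle z w a
    have := mem_ball.1 hz
    rw [mem_closedBall]; linarith
  have := sch_bloch1 (g := g) (a := w) (half_pos htp) (hg.mono (hsb.trans hss)) hdw (by
    intro z hz
    have h2 := hmax (hsb hz)
    simp only [mem_ofPred_eq] at h2
    have h3 : t / 2 ≤ R - dist z a := by
      have := dist_triangle z w a
      have := mem_ball.1 hz
      linarith
    have h4 : ‖deriv g z‖ * (t / 2) ≤ ‖deriv g w‖ * t :=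
      (mul_le_mul_of_nonneg_left h3 (norm_nonneg _)).trans h2
    by_contra! h5
    nlinarith)
  obtain ⟨p, hp, hpn⟩ := hno (g w)
  refine hpn (image_mono (hsb.trans hss) (this ?_))
  rw [mem_closedBall, dist_eq_norm]
  linarith

theorem sch_disc (M r : ℝ) (hr0 : 0 < r) (hr1 : r < 1) :
    ∃ C > 0, ∀ f : ℂ → ℂ, DifferentiableOn ℂ f (ball 0 1) →
      (∀ z ∈ ball (0 : ℂ) 1, f z ≠ 0 ∧ f z ≠ 1) →
      ‖f 0‖ ≤ M → ∀ z : ℂ, ‖z‖ ≤ r → ‖f z‖ ≤ C := by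
  set B : ℝ := 3 + 2 * M + 96 / (1 - r) with hB
  obtain ⟨C, hC⟩ := (isCompact_closedBall (0:ℂ) B).exists_bound_of_continuousOn
    (f := fun w => (Complex.cos (Real.pi * Complex.cos (Real.pi * w)) + 1) / 2)
    (by fun_prop)
  refine ⟨max C 1, by positivity, ?_⟩
  intro f hf h01 hM z hz
  have h00 : (0:ℂ) ∈ ball (0:ℂ) 1 := by simp
  obtain ⟨G, hG, hGe, hG0⟩ := sch_cos (F := fun z => 2 * f z - 1) ((hf.const_mul 2).sub_const 1) (by
    intro z hz
    refine ⟨fun h => (h01 z hz).2 ?_, fun h => (h01 z hz).1 ?_⟩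
    · linear_combination h / 2
    · linear_combination h / 2)
  have hGint : ∀ z ∈ ball (0:ℂ) 1, ∀ n : ℤ, G z ≠ n := by
    intro z hz n hn
    have h1 := hGe z hz
    rw [hn, mul_comm] at h1
    rcases sch_cosint n with h | h <;> rw [h] at h1
    · exact (h01 z hz).2 (by linear_combination -h1 / 2)
    · exact (h01 z hz).1 (by linear_combination -h1 / 2)
  obtain ⟨g, hg, hge, hg0⟩ := sch_cos hG (fun z hz =>
    ⟨by simpa using hGint z hz 1, by simpa using hGint z hz (-1)⟩)
  have hder : ∀ x ∈ closedBall (0:ℂ) r, ‖deriv g x‖ ≤ 96 / (1 - r) := by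
    intro x hx
    have hs : ball x (2 * ((1 - r) / 2)) ⊆ ball (0:ℂ) 1 := by
      apply ball_subset_ball'
      have := mem_closedBall.1 hx
      linarith
    have := sch_bloch (g := g) (a := x) (R := (1 - r) / 2) (by linarith) (hg.mono hs) (by
      intro w
      obtain ⟨p, hp, n, hn⟩ := sch_lattice w
      refine ⟨p, hp, ?_⟩
      rintro ⟨u, hu, rfl⟩
      exact hGint u (hs hu) n (by rw [← hge u (hs hu), hn]))
    refine this.trans (le_of_eq ?_)
    have : 1 - r ≠ 0 := by linarith
    field_simp; norm_num
  have hsr : closedBall (0:ℂ) r ⊆ ball 0 1 := closedBall_subset_ball hr1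
  have hzr : z ∈ closedBall (0:ℂ) r := by simpa using hz
  have hlip := (convex_closedBall (0:ℂ) r).norm_image_sub_le_of_norm_deriv_le (𝕜 := ℂ)
    (fun x hx => hg.differentiableAt (isOpen_ball.mem_nhds (hsr hx))) hder
    (show (0:ℂ) ∈ closedBall (0:ℂ) r by simp [hr0.le]) hzr
  have hgz : ‖g z‖ ≤ B := by
    have h1 : ‖g z‖ ≤ ‖g z - g 0‖ + ‖g 0‖ := by simpa using norm_add_le (g z - g 0) (g 0)
    have h2 : ‖2 * f 0 - 1‖ ≤ 2 * M + 1 := by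
      refine (norm_sub_le _ _).trans ?_
      simp; linarith
    have h3 : 96 / (1 - r) * ‖z - 0‖ ≤ 96 / (1 - r) := by
      apply mul_le_of_le_one_right
      · apply div_nonneg <;> linarith
      · simp; linarith
    linarith
  have := hC (g z) (by simpa using hgz)
  rw [hge z (hsr hzr), hGe z (hsr hzr)] at this
  refine le_trans (le_of_eq ?_) (this.trans (le_max_left _ _))
  congr 1; ring

end

/-- Schottky's theorem in the unit ball of ℂⁿ. -/
theorem stmt6 (n : ℕ) (M r : ℝ) (hM : 0 < M) (hr0 : 0 < r) (hr1 : r < 1) :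
    ∃ C > 0, ∀ f : Cn n → ℂ,
      DifferentiableOn ℂ f (Metric.ball 0 1) →
      (∀ z ∈ Metric.ball (0 : Cn n) 1, f z ≠ 0 ∧ f z ≠ 1) →
      ‖f 0‖ ≤ M → ∀ z : Cn n, ‖z‖ ≤ r → ‖f z‖ ≤ C := by
  obtain ⟨C, hC0, hC⟩ := sch_disc M r hr0 hr1
  refine ⟨C, hC0, ?_⟩
  intro f hf h01 h0 z hz
  have hmaps : Set.MapsTo (fun w : ℂ => w • ((‖z‖ : ℂ)⁻¹ • z)) (Metric.ball 0 1) (Metric.ball 0 1) := by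
    intro w hw
    rw [mem_ball_zero_iff] at hw ⊢
    have hu : ‖(‖z‖ : ℂ)⁻¹ • z‖ ≤ 1 := by
      rw [norm_smul, norm_inv, Complex.norm_real, norm_norm]
      exact inv_mul_le_one
    rw [norm_smul]
    nlinarith [norm_nonneg w]
  have := hC (fun w => f (w • ((‖z‖ : ℂ)⁻¹ • z)))
    (hf.comp (by fun_prop) hmaps) (fun w hw => h01 _ (hmaps hw)) (by simpa using h0) (‖z‖ : ℂ)
    (by simpa using hz)
  have e : (‖z‖ : ℂ) • ((‖z‖ : ℂ)⁻¹ • z) = z := by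
    by_cases h : z = 0
    · simp [h]
    · rw [smul_inv_smul₀]; simpa using h
  simpa only [e] using this
end

section
/- Carathéodory's normality theorem: Let 𝓕 be a family of holomorphic functions on a domain Ω ⊆ ℂⁿ. Suppose there is ε > 0 such that for each f ∈ 𝓕 there are distinct points a_f, b_f ∈ ℂ with f(z) ≠ a_f and f(z) ≠ b_f for all z ∈ Ω, and s(a_f, ∞)·s(a_f, b_f)·s(∞, b_f) > ε, where s is the spherical (chordal) distance on the Riemann sphere. Then 𝓕 is normal on Ω. -/
open Filter Topology

lemma bloch_local {g : ℂ → ℂ} {p : ℂ} {t : ℝ} (ht : 0 < t)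
    (hg : DifferentiableOn ℂ g (Metric.ball p t)) (hA : 0 < ‖deriv g p‖)
    (hb : ∀ z ∈ Metric.ball p t, ‖deriv g z‖ ≤ 2 * ‖deriv g p‖) :
    Metric.ball (g p) (‖deriv g p‖ * t / 32) ⊆ g '' Metric.ball p t := by
  set A := ‖deriv g p‖ with hAdef
  have hd : DifferentiableOn ℂ (deriv g) (Metric.ball p t) := hg.deriv Metric.isOpen_ball
  have hmaps : Set.MapsTo (deriv g) (Metric.ball p t) (Metric.closedBall (deriv g p) (4 * A)) := by
    intro z hz
    rw [Metric.mem_closedBall, dist_eq_norm]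
    have := norm_sub_le (deriv g z) (deriv g p)
    have := hb z hz
    linarith
  have h1 : ∀ z ∈ Metric.closedBall p (t / 8), ‖deriv g z - deriv g p‖ ≤ A / 2 := by
    intro z hz
    rw [Metric.mem_closedBall] at hz
    have := Complex.dist_le_div_mul_dist_of_mapsTo_ball hd hmaps
      (z := z) (by rw [Metric.mem_ball]; linarith)
    rw [dist_eq_norm] at this
    refine this.trans ?_
    calc 4 * A / t * dist z p ≤ 4 * A / t * (t / 8) := by gcongr
      _ = A / 2 := by field_simp; norm_num
  have hsub : Metric.closedBall p (t / 8) ⊆ Metric.ball p t :=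
    Metric.closedBall_subset_ball (by linarith)
  have h2 : ∀ z ∈ Metric.sphere p (t / 8), A * t / 16 ≤ ‖g z - g p‖ := by
    intro z hz
    have hz' : z ∈ Metric.closedBall p (t / 8) := Metric.sphere_subset_closedBall hz
    have hgd : ∀ x ∈ Metric.closedBall p (t / 8),
        HasDerivWithinAt (fun w => g w - deriv g p * w) (deriv g x - deriv g p)
          (Metric.closedBall p (t / 8)) x := by
      intro x hx
      have h3 := (hg.differentiableAt (Metric.isOpen_ball.mem_nhds (hsub hx))).hasDerivAt
      have h4 := h3.fun_sub ((hasDerivAt_id' x).const_mul (deriv g p))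
      rw [mul_one] at h4
      exact h4.hasDerivWithinAt
    have h5 := Convex.norm_image_sub_le_of_norm_hasDerivWithin_le hgd h1 (convex_closedBall _ _)
      (Metric.mem_closedBall_self (by linarith)) hz'
    have hzn : ‖z - p‖ = t / 8 := by simpa [dist_eq_norm] using hz
    rw [hzn] at h5
    have h6 : ‖deriv g p * (z - p)‖ = A * (t / 8) := by rw [norm_mul, hzn]
    have h7 : deriv g p * (z - p) = (g z - g p) -
      ((g z - deriv g p * z) - (g p - deriv g p * p)) := by ring
    have h8 := norm_sub_le (g z - g p) ((g z - deriv g p * z) - (g p - deriv g p * p))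
    rw [← h7, h6] at h8
    linarith
  have h9 : ∃ᶠ z in 𝓝 p, g z ≠ g p := by
    intro hcon
    have : g =ᶠ[𝓝 p] fun _ => g p := by
      filter_upwards [hcon] with z hz
      simpa using hz
    have := this.deriv_eq
    simp at this
    simp [A, this] at hA
  have hdc : DiffContOnCl ℂ g (Metric.ball p (t / 8)) :=
    (hg.mono (Metric.closure_ball_subset_closedBall.trans hsub)).diffContOnCl
  have := hdc.ball_subset_image_closedBall (by linarith) h2 h9
  have e : A * t / 16 / 2 = A * t / 32 := by ring
  rw [e] at this
  exact this.trans (Set.image_mono hsub)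

lemma bloch_bound {g : ℂ → ℂ} (hg : DifferentiableOn ℂ g (Metric.ball 0 1))
    (ho : ∀ w : ℂ, ∃ v ∈ Metric.ball w 2, ∀ z ∈ Metric.ball (0 : ℂ) 1, g z ≠ v) :
    ∀ z ∈ Metric.closedBall (0 : ℂ) (1 / 4), ‖g z - g 0‖ ≤ 128 := by
  have hd : DifferentiableOn ℂ (deriv g) (Metric.ball 0 1) := hg.deriv Metric.isOpen_ball
  have hsub : Metric.closedBall (0 : ℂ) (1 / 2) ⊆ Metric.ball 0 1 :=
    Metric.closedBall_subset_ball (by norm_num)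
  have hc : ContinuousOn (fun z : ℂ => (1 / 2 - ‖z‖) * ‖deriv g z‖)
      (Metric.closedBall 0 (1 / 2)) :=
    (by fun_prop : ContinuousOn (fun z : ℂ => (1 / 2 - ‖z‖)) _).mul
      (hd.continuousOn.mono hsub).norm
  obtain ⟨p, hp, hmax⟩ := (isCompact_closedBall (0 : ℂ) (1 / 2)).exists_isMaxOn
    ⟨0, by simp⟩ hc
  have hpn : ‖p‖ ≤ 1 / 2 := by simpa using hp
  have hM : ∀ z : ℂ, ‖z‖ ≤ 1 / 2 →
      (1 / 2 - ‖z‖) * ‖deriv g z‖ ≤ (1 / 2 - ‖p‖) * ‖deriv g p‖ := by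
    intro z hz
    exact hmax (by simpa using hz)
  have hle : (1 / 2 - ‖p‖) * ‖deriv g p‖ ≤ 128 := by
    by_contra! hlt
    have hA : 0 < ‖deriv g p‖ := by
      rcases (norm_nonneg (deriv g p)).eq_or_lt with h | h
      · rw [← h] at hlt; norm_num at hlt
      · exact h
    have ht : 0 < 1 / 2 - ‖p‖ := by
      by_contra! h
      have : (1 / 2 - ‖p‖) * ‖deriv g p‖ ≤ 0 := mul_nonpos_of_nonpos_of_nonneg h hA.le
      linarith
    have hball : ∀ z ∈ Metric.ball p ((1 / 2 - ‖p‖) / 2), ‖z‖ ≤ 1 / 2 - (1 / 2 - ‖p‖) / 2 := by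
      intro z hz
      rw [Metric.mem_ball, dist_eq_norm] at hz
      have := norm_add_le (z - p) p
      rw [sub_add_cancel] at this
      linarith
    have hb1 : Metric.ball p ((1 / 2 - ‖p‖) / 2) ⊆ Metric.ball 0 1 := by
      intro z hz
      have := hball z hz
      simp only [mem_ball_zero_iff]
      linarith
    have hi := bloch_local (g := g) (p := p) (t := (1 / 2 - ‖p‖) / 2) (by linarith)
      (hg.mono hb1) hA (by
        intro z hz
        have h1 := hball z hz
        have h2 := hM z (by linarith)
        have h3 : (1 / 2 - ‖p‖) / 2 * ‖deriv g z‖ ≤ (1 / 2 - ‖z‖) * ‖deriv g z‖ := by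
          gcongr; linarith
        have h4 : (1 / 2 - ‖p‖) / 2 * ‖deriv g z‖ ≤ (1 / 2 - ‖p‖) / 2 * (2 * ‖deriv g p‖) := by
          linarith
        exact le_of_mul_le_mul_left h4 (by linarith))
    obtain ⟨v, hv, hv'⟩ := ho (g p)
    obtain ⟨z, hz, hzv⟩ := hi (Metric.ball_subset_ball (by linarith) hv)
    exact hv' z (hb1 hz) hzv
  intro z hz
  have hder : ∀ x ∈ Metric.closedBall (0 : ℂ) (1 / 4), ‖deriv g x‖ ≤ 512 := by
    intro x hx
    have hx' : ‖x‖ ≤ 1 / 4 := by simpa using hx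
    have h1 := hM x (by linarith)
    have h3 : (1 / 4) * ‖deriv g x‖ ≤ (1 / 2 - ‖x‖) * ‖deriv g x‖ := by
      gcongr; linarith
    linarith
  have h5 := Convex.norm_image_sub_le_of_norm_deriv_le (f := g) (fun x hx =>
      hg.differentiableAt (Metric.isOpen_ball.mem_nhds
        (Metric.closedBall_subset_ball (by norm_num) hx))) hder (convex_closedBall _ _)
      (Metric.mem_closedBall_self (by norm_num)) hz
  have hz' : ‖z‖ ≤ 1 / 4 := by simpa using hz
  rw [sub_zero] at h5
  linarith

lemma exists_log {h : ℂ → ℂ} (hd : DifferentiableOn ℂ h (Metric.ball 0 1))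
    (h0 : ∀ z ∈ Metric.ball (0 : ℂ) 1, h z ≠ 0) :
    ∃ L : ℂ → ℂ, DifferentiableOn ℂ L (Metric.ball 0 1) ∧ L 0 = Complex.log (h 0) ∧
      ∀ z ∈ Metric.ball (0 : ℂ) 1, Complex.exp (L z) = h z := by
  have hd' : DifferentiableOn ℂ (fun z => deriv h z / h z) (Metric.ball 0 1) :=
    (hd.deriv Metric.isOpen_ball).div hd h0
  obtain ⟨L, hL0, hL⟩ := hd'.isExactOn_ball.with_val_at 0 (Complex.log (h 0))
  refine ⟨L, fun z hz => (hL z hz).differentiableAt.differentiableWithinAt, hL0, ?_⟩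
  intro z hz
  have hz0 : (0 : ℂ) ∈ Metric.ball (0 : ℂ) 1 := by simp
  have key : ∀ x ∈ Metric.ball (0 : ℂ) 1,
      HasDerivWithinAt (fun w => h w * Complex.exp (-L w)) 0 (Metric.ball 0 1) x := by
    intro x hx
    have h1 := (hd.differentiableAt (Metric.isOpen_ball.mem_nhds hx)).hasDerivAt
    have h2 := h1.mul (hL x hx).neg.cexp
    have e : deriv h x * Complex.exp (-L x) + h x * (Complex.exp (-L x) * -(deriv h x / h x)) = 0 := by
      field_simp [h0 x hx]
      ring
    have h3 := h2.hasDerivWithinAt (s := Metric.ball 0 1)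
    exact e ▸ h3
  have h5 := Convex.norm_image_sub_le_of_norm_hasDerivWithin_le (C := 0) key (by simp)
    (convex_ball _ _) hz0 hz
  simp only [zero_mul, norm_le_zero_iff, sub_eq_zero] at h5
  rw [hL0, Complex.exp_neg, Complex.exp_neg, Complex.exp_log (h0 0 hz0),
    mul_inv_cancel₀ (h0 0 hz0)] at h5
  have := Complex.exp_ne_zero (L z)
  field_simp at h5
  exact h5.symm

lemma grid (w : ℂ) : ∃ v ∈ Metric.ball w 2, ∃ k : ℤ, Complex.cosh v ^ 2 = k := by
  -- real part
  have hre : ∃ x : ℝ, |x - w.re| ≤ 1 ∧ ∃ k : ℤ, Real.cosh x ^ 2 = k := by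
    have key : ∀ y : ℝ, 0 ≤ y → ∃ x : ℝ, |x - y| ≤ 1 ∧ ∃ k : ℤ, Real.cosh x ^ 2 = k := by
      intro y hy
      have h1 : Real.cosh y ^ 2 + 1 ≤ Real.cosh (y + 1) ^ 2 := by
        rw [Real.cosh_add]
        have a1 := Real.one_le_cosh y
        have a2 := Real.sinh_nonneg_iff.2 hy
        have a3 := Real.self_le_sinh_iff.2 (zero_le_one (α := ℝ))
        have a4 := Real.cosh_sq 1
        have a5 := Real.one_le_cosh 1
        have a6 : 0 ≤ Real.sinh y * Real.sinh 1 := by positivity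
        have a7 : 2 ≤ Real.cosh 1 ^ 2 := by nlinarith
        have a8 : (Real.cosh y * Real.cosh 1) ^ 2 ≤
          (Real.cosh y * Real.cosh 1 + Real.sinh y * Real.sinh 1) ^ 2 := by
          gcongr; linarith
        nlinarith [mul_le_mul_of_nonneg_left a7 (sq_nonneg (Real.cosh y))]
      have h2 : ContinuousOn (fun x => Real.cosh x ^ 2) (Set.Icc y (y + 1)) := by fun_prop
      have h3 : ((⌈Real.cosh y ^ 2⌉ : ℤ) : ℝ) ∈
          Set.Icc (Real.cosh y ^ 2) (Real.cosh (y + 1) ^ 2) :=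
        ⟨Int.le_ceil _, (Int.ceil_lt_add_one _).le.trans h1⟩
      obtain ⟨x, hx, hx'⟩ := intermediate_value_Icc (by linarith) h2 h3
      refine ⟨x, ?_, _, hx'⟩
      rw [abs_le]; constructor <;> linarith [hx.1, hx.2]
    rcases le_total 0 w.re with h | h
    · exact key _ h
    · obtain ⟨x, hx, k, hk⟩ := key (-w.re) (by linarith)
      refine ⟨-x, ?_, k, by rw [Real.cosh_neg, hk]⟩
      rw [← abs_neg]; convert hx using 2; ring
  obtain ⟨x, hx, k, hk⟩ := hre
  set m : ℤ := round (w.im / (Real.pi / 2)) with hm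
  have hpi := Real.pi_pos
  have him : |m * (Real.pi / 2) - w.im| ≤ Real.pi / 4 := by
    have h1 := abs_sub_round (w.im / (Real.pi / 2))
    have h2 : m * (Real.pi / 2) - w.im = -((w.im / (Real.pi / 2) - m) * (Real.pi / 2)) := by
      field_simp; ring
    rw [h2, abs_neg, abs_mul, abs_of_pos (by positivity : 0 < Real.pi / 2)]
    rw [← hm] at h1
    nlinarith
  refine ⟨⟨x, m * (Real.pi / 2)⟩, ?_, ?_⟩
  · rw [Metric.mem_ball, dist_eq_norm]
    have h1 := Complex.norm_le_abs_re_add_abs_im ((⟨x, m * (Real.pi / 2)⟩ : ℂ) - w)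
    simp only [Complex.sub_re, Complex.sub_im] at h1
    have := Real.pi_lt_four
    linarith
  · have hv : (⟨x, m * (Real.pi / 2)⟩ : ℂ) = x + (m * (Real.pi / 2) : ℝ) * Complex.I := by
      apply Complex.ext <;> simp
    have h2 : ∀ v : ℂ, Complex.cosh v ^ 2 = (Complex.cosh (2 * v) + 1) / 2 := by
      intro v; rw [Complex.cosh_two_mul]
      have := Complex.cosh_sq_sub_sinh_sq v
      linear_combination (1/2 : ℂ) * this
    have hk' : Complex.cosh x ^ 2 = k := by exact_mod_cast congrArg (fun r : ℝ => (r : ℂ)) hk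
    rw [h2] at hk'
    rw [hv, h2]
    have e : 2 * ((x : ℂ) + (m * (Real.pi / 2) : ℝ) * Complex.I) =
      2 * x + (m * Real.pi) * Complex.I := by push_cast; ring
    have hs : Complex.sin (m * Real.pi) = 0 := Complex.sin_int_mul_pi m
    have hc : Complex.cos (m * Real.pi) ^ 2 = 1 := by
      have := Complex.sin_sq_add_cos_sq (m * Real.pi)
      rw [hs] at this
      simpa using this
    rw [e, Complex.cosh_add, Complex.cosh_mul_I, Complex.sinh_mul_I, hs]
    rcases (sq_eq_sq_iff_eq_or_eq_neg.1 (hc.trans (one_pow 2).symm)) with hm | hm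
    · refine ⟨k, ?_⟩
      rw [hm, ← hk']; ring
    · refine ⟨1 - k, ?_⟩
      rw [hm]; push_cast; rw [← hk']; ring

lemma schottky_aux (R : ℝ) : ∃ C : ℝ, ∀ h : ℂ → ℂ, DifferentiableOn ℂ h (Metric.ball 0 1) →
    (∀ z ∈ Metric.ball (0 : ℂ) 1, h z ≠ 0 ∧ h z ≠ 1) → 1 / 2 ≤ ‖h 0‖ → ‖h 0‖ ≤ R →
    ∀ z ∈ Metric.closedBall (0 : ℂ) (1 / 4), ‖h z‖ ≤ C := by
  refine ⟨Real.exp (2 * Real.pi * Real.exp (128 + (2 + 2 * (R + 1 + Real.pi))) ^ 2), ?_⟩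
  intro h hd ho h1 h2 z hz
  have hpi := Real.pi_pos
  have hpi3 := Real.pi_gt_three
  have hzB : z ∈ Metric.ball (0 : ℂ) 1 := Metric.closedBall_subset_ball (by norm_num) hz
  have h0B : (0 : ℂ) ∈ Metric.ball (0 : ℂ) 1 := by simp
  obtain ⟨L, hL, hL0, hLe⟩ := exists_log hd (fun z hz => (ho z hz).1)
  set F : ℂ → ℂ := fun z => L z / (2 * Real.pi * Complex.I) with hF
  have hc0 : (2 * Real.pi * Complex.I : ℂ) ≠ 0 := Complex.two_pi_I_ne_zero
  have hcn : ‖(2 * Real.pi * Complex.I : ℂ)‖ = 2 * Real.pi := by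
    simp [abs_of_pos hpi]
  have hFd : DifferentiableOn ℂ F (Metric.ball 0 1) := hL.div_const _
  have hFe : ∀ z, L z = 2 * Real.pi * Complex.I * F z := by
    intro z; simp only [hF]; field_simp
  have hFint : ∀ z ∈ Metric.ball (0 : ℂ) 1, ∀ k : ℤ, F z ≠ k := by
    intro z hz k hk
    apply (ho z hz).2
    rw [← hLe z hz, hFe, hk, mul_comm]
    exact Complex.exp_int_mul_two_pi_mul_I k
  have hF0 : ‖F 0‖ ≤ R + 1 + Real.pi := by
    have e1 : ‖F 0‖ ≤ ‖L 0‖ := by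
      rw [hFe 0, norm_mul, hcn]
      nlinarith [norm_nonneg (F 0)]
    have e2 : ‖L 0‖ ≤ |(L 0).re| + |(L 0).im| := Complex.norm_le_abs_re_add_abs_im _
    rw [hL0, Complex.log_re, Complex.log_im] at e2
    have e3 := Complex.abs_arg_le_pi (h 0)
    have e4 : |Real.log ‖h 0‖| ≤ R + 1 := by
      have p : 0 < ‖h 0‖ := by linarith
      rw [abs_le]
      constructor
      · have := Real.one_sub_inv_le_log_of_pos p
        have : ‖h 0‖⁻¹ ≤ 2 := by
          rw [inv_le_comm₀ p two_pos]; linarith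
        linarith
      · have := Real.log_le_sub_one_of_pos p
        linarith
    rw [← hL0] at e2
    linarith
  -- square roots
  obtain ⟨l1, hl1, -, hl1e⟩ := exists_log hFd (fun z hz => by simpa using hFint z hz 0)
  obtain ⟨l2, hl2, -, hl2e⟩ := exists_log (h := fun z => F z - 1) (hFd.sub_const 1)
    (fun z hz => sub_ne_zero.2 (by simpa using hFint z hz 1))
  set u : ℂ → ℂ := fun z => Complex.exp (l1 z / 2) with hu
  set v : ℂ → ℂ := fun z => Complex.exp (l2 z / 2) with hv
  have hu2 : ∀ z ∈ Metric.ball (0 : ℂ) 1, u z ^ 2 = F z := by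
    intro z hz
    rw [← hl1e z hz]; simp only [hu]; rw [← Complex.exp_nat_mul]; congr 1; push_cast; ring
  have hv2 : ∀ z ∈ Metric.ball (0 : ℂ) 1, v z ^ 2 = F z - 1 := by
    intro z hz
    rw [← hl2e z hz]; simp only [hv]; rw [← Complex.exp_nat_mul]; congr 1; push_cast; ring
  have huv : ∀ z ∈ Metric.ball (0 : ℂ) 1, (u z - v z) * (u z + v z) = 1 := by
    intro z hz
    linear_combination hu2 z hz - hv2 z hz
  have hud : DifferentiableOn ℂ u (Metric.ball 0 1) := (hl1.div_const 2).cexp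
  have hvd : DifferentiableOn ℂ v (Metric.ball 0 1) := (hl2.div_const 2).cexp
  obtain ⟨g, hg, -, hge⟩ := exists_log (h := fun z => u z - v z) (hud.sub hvd)
    (fun z hz => left_ne_zero_of_mul_eq_one (huv z hz))
  have hge' : ∀ z ∈ Metric.ball (0 : ℂ) 1, Complex.exp (-g z) = u z + v z := by
    intro z hz
    rw [Complex.exp_neg, hge z hz]
    exact inv_eq_of_mul_eq_one_right (huv z hz)
  have hgc : ∀ z ∈ Metric.ball (0 : ℂ) 1, Complex.cosh (g z) ^ 2 = F z := by
    intro z hz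
    rw [Complex.cosh, hge z hz, hge' z hz, ← hu2 z hz]; ring
  have hb := bloch_bound hg (fun w => by
    obtain ⟨v, hv, k, hk⟩ := grid w
    refine ⟨v, hv, fun z hz he => ?_⟩
    rw [← he, hgc z hz] at hk
    exact hFint z hz k hk) z hz
  have hnu : ‖u 0‖ ≤ 1 + ‖F 0‖ := by
    have := congrArg norm (hu2 0 h0B)
    rw [norm_pow] at this
    nlinarith [sq_nonneg (‖u 0‖ - 1), norm_nonneg (u 0)]
  have hnv : ‖v 0‖ ≤ 1 + ‖F 0‖ := by
    have := congrArg norm (hv2 0 h0B)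
    rw [norm_pow] at this
    have t := norm_sub_le (F 0) 1
    rw [norm_one] at t
    by_contra! hlt
    nlinarith [norm_nonneg (F 0), mul_pos (sub_pos.2 hlt) (sub_pos.2 hlt)]
  have hg0 : |(g 0).re| ≤ 2 + 2 * (R + 1 + Real.pi) := by
    have t1 : Real.exp (g 0).re = ‖u 0 - v 0‖ := by rw [← Complex.norm_exp, hge 0 h0B]
    have t2 : Real.exp (-(g 0).re) = ‖u 0 + v 0‖ := by
      rw [← hge' 0 h0B, Complex.norm_exp, Complex.neg_re]
    have t3 := norm_sub_le (u 0) (v 0)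
    have t4 := norm_add_le (u 0) (v 0)
    have t5 := Real.add_one_le_exp (g 0).re
    have t6 := Real.add_one_le_exp (-(g 0).re)
    rw [abs_le]; constructor <;> linarith
  have hgz : |(g z).re| ≤ 128 + (2 + 2 * (R + 1 + Real.pi)) := by
    have t1 := (Complex.abs_re_le_norm (g z - g 0)).trans hb
    rw [Complex.sub_re] at t1
    have := abs_add_le ((g z).re - (g 0).re) (g 0).re
    rw [sub_add_cancel] at this
    linarith
  have hcosh : ‖Complex.cosh (g z)‖ ≤ Real.exp (128 + (2 + 2 * (R + 1 + Real.pi))) := by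
    have t1 : ‖Complex.exp (g z)‖ ≤ Real.exp (128 + (2 + 2 * (R + 1 + Real.pi))) := by
      rw [Complex.norm_exp]
      exact Real.exp_le_exp.2 ((le_abs_self _).trans hgz)
    have t2 : ‖Complex.exp (-g z)‖ ≤ Real.exp (128 + (2 + 2 * (R + 1 + Real.pi))) := by
      rw [Complex.norm_exp, Complex.neg_re]
      exact Real.exp_le_exp.2 ((neg_le_abs _).trans hgz)
    rw [Complex.cosh, norm_div]
    have := norm_add_le (Complex.exp (g z)) (Complex.exp (-g z))
    rw [Complex.norm_ofNat, div_le_iff₀ two_pos]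
    linarith
  rw [← hLe z hzB, Complex.norm_exp]
  apply Real.exp_le_exp.2
  refine (Complex.re_le_norm _).trans ?_
  rw [hFe z, norm_mul, hcn, ← hgc z hzB, norm_pow]
  gcongr

lemma schottky (R : ℝ) : ∃ C : ℝ, ∀ h : ℂ → ℂ, DifferentiableOn ℂ h (Metric.ball 0 1) →
    (∀ z ∈ Metric.ball (0 : ℂ) 1, h z ≠ 0 ∧ h z ≠ 1) → ‖h 0‖ ≤ R →
    ∀ z ∈ Metric.closedBall (0 : ℂ) (1 / 4), ‖h z‖ ≤ C := by
  obtain ⟨C, hC⟩ := schottky_aux (R + 1)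
  refine ⟨C + 1, fun h hd ho hR z hz => ?_⟩
  rcases le_total (1 / 2) ‖h 0‖ with h1 | h1
  · have := hC h hd ho h1 (by linarith) z hz
    linarith
  · have t1 := norm_sub_le (1 : ℂ) (h 0)
    have t2 := norm_sub_norm_le (1 : ℂ) (h 0)
    rw [norm_one] at t1 t2
    have := hC (fun z => 1 - h z) (hd.const_sub 1) (fun z hz =>
      ⟨sub_ne_zero.2 (ho z hz).2.symm, fun e => (ho z hz).1 (by linear_combination -e)⟩)
      (by linarith) (by linarith) z hz
    have t3 := norm_sub_le (1 : ℂ) (1 - h z)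
    rw [norm_one, sub_sub_cancel] at t3
    linarith

lemma chordal_bounds {ε : ℝ} (hε : 0 < ε) {a b : ℂ}
    (h : ε < chordalInf a * chordal a b * chordalInf b) :
    ‖a‖ ≤ 2 / ε ∧ ‖b‖ ≤ 2 / ε ∧ ε ≤ ‖b - a‖ := by
  unfold chordalInf chordal at h
  have aux : ∀ c : ℂ, 1 ≤ Real.sqrt (1 + ‖c‖ ^ 2) ∧ ‖c‖ ≤ Real.sqrt (1 + ‖c‖ ^ 2) := by
    intro c
    exact ⟨Real.le_sqrt_of_sq_le (by nlinarith [sq_nonneg ‖c‖]),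
      Real.le_sqrt_of_sq_le (by linarith)⟩
  obtain ⟨hA1, hA2⟩ := aux a
  obtain ⟨hB1, hB2⟩ := aux b
  set A := Real.sqrt (1 + ‖a‖ ^ 2)
  set B := Real.sqrt (1 + ‖b‖ ^ 2)
  have hd : dist a b = ‖b - a‖ := by rw [dist_comm, dist_eq_norm]
  rw [hd] at h
  have e : 1 / A * (‖b - a‖ / (A * B)) * (1 / B) = ‖b - a‖ / (A * B) ^ 2 := by
    field_simp
  rw [e, lt_div_iff₀ (by positivity)] at h
  have hAB : 1 ≤ A * B := by nlinarith
  have h1 : ‖b - a‖ ≤ 2 * (A * B) := by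
    have := norm_sub_le b a
    nlinarith
  have h2 : ε * (A * B) ≤ 2 := by
    have : (ε * (A * B)) * (A * B) ≤ 2 * (A * B) := by nlinarith
    exact le_of_mul_le_mul_right this (by linarith)
  have hA3 : ‖a‖ ≤ A * B := hA2.trans (le_mul_of_one_le_right (by linarith) hB1)
  have hB3 : ‖b‖ ≤ A * B := hB2.trans (le_mul_of_one_le_left (by linarith) hA1)
  have h5 := mul_le_mul_of_nonneg_left hA3 hε.le
  have h6 := mul_le_mul_of_nonneg_left hB3 hε.le
  refine ⟨?_, ?_, ?_⟩
  · rw [le_div_iff₀ hε, mul_comm]; linarith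
  · rw [le_div_iff₀ hε, mul_comm]; linarith
  · have h7 : ε * 1 ≤ ε * (A * B) ^ 2 := mul_le_mul_of_nonneg_left (one_le_pow₀ hAB) hε.le
    linarith

lemma harnack {E : Type*} [NormedAddCommGroup E] [NormedSpace ℂ E] {ε : ℝ} (hε : 0 < ε) (R : ℝ) :
    ∃ C : ℝ, ∀ (f : E → ℂ) (a b : ℂ) (w : E) (ρ : ℝ), DifferentiableOn ℂ f (Metric.ball w ρ) →
      (∀ z ∈ Metric.ball w ρ, f z ≠ a ∧ f z ≠ b) →
      ε < chordalInf a * chordal a b * chordalInf b → ‖f w‖ ≤ R →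
      ∀ z ∈ Metric.ball w (ρ / 8), ‖f z‖ ≤ C := by
  obtain ⟨C, hC⟩ := schottky ((R + 2 / ε) / ε)
  refine ⟨2 / ε + (2 / ε + 2 / ε) * C, fun f a b w ρ hd ho hab hR z hz => ?_⟩
  obtain ⟨ha, hb, hba⟩ := chordal_bounds hε hab
  have hba0 : b - a ≠ 0 := by
    intro h0; rw [h0, norm_zero] at hba; linarith
  rw [Metric.mem_ball, dist_eq_norm] at hz
  have hm : ∀ ζ ∈ Metric.ball (0 : ℂ) 1, w + ζ • ((8 : ℂ) • (z - w)) ∈ Metric.ball w ρ := by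
    intro ζ hζ
    rw [mem_ball_zero_iff] at hζ
    rw [Metric.mem_ball, dist_eq_norm, add_sub_cancel_left, norm_smul, norm_smul,
      Complex.norm_ofNat]
    nlinarith [norm_nonneg (z - w)]
  have hR0 : 0 ≤ R := (norm_nonneg _).trans hR
  have key := hC (fun ζ => (f (w + ζ • ((8 : ℂ) • (z - w))) - a) / (b - a))
    (by
      refine DifferentiableOn.div_const (DifferentiableOn.sub_const ?_ _) _
      exact hd.comp (f := fun ζ : ℂ => w + ζ • ((8 : ℂ) • (z - w))) (by fun_prop) hm)
    (by
      intro ζ hζ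
      obtain ⟨h1, h2⟩ := ho _ (hm ζ hζ)
      refine ⟨div_ne_zero (sub_ne_zero.2 h1) hba0, fun h3 => h2 ?_⟩
      rw [div_eq_one_iff_eq hba0] at h3
      exact sub_left_injective h3)
    (by
      simp only [zero_smul, add_zero, norm_div]
      have := norm_sub_le (f w) a
      gcongr
      linarith)
    (1 / 8) (by simp; norm_num)
  have e1 : w + (1 / 8 : ℂ) • ((8 : ℂ) • (z - w)) = z := by
    rw [smul_smul]; norm_num
  simp only [e1] at key
  have e2 : f z = a + (b - a) * ((f z - a) / (b - a)) := by field_simp; ring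
  have hC0 : 0 ≤ C := (norm_nonneg _).trans key
  rw [e2]
  refine (norm_add_le _ _).trans ?_
  rw [norm_mul]
  have := norm_sub_le b a
  gcongr
  linarith

lemma ascoli_seq {X : Type*} [PseudoMetricSpace X] [WeaklyLocallyCompactSpace X]
    [SigmaCompactSpace X] (G : ℕ → X → ℂ) (M c r : X → ℝ) (hr : ∀ x, 0 < r x)
    (hM : ∀ j x, ‖G j x‖ ≤ M x)
    (hc : ∀ j x z, dist z x < r x → dist (G j z) (G j x) ≤ c x * dist z x) :
    ∃ φ : ℕ → ℕ, StrictMono φ ∧ ∃ g : X → ℂ,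
      TendstoLocallyUniformly (fun j => G (φ j)) g atTop := by
  set T : Set (X → ℂ) := {f | (∀ x, f x ∈ Metric.closedBall (0 : ℂ) (M x)) ∧
    ∀ x z, dist z x < r x → dist (f z) (f x) ≤ c x * dist z x} with hT
  have hTc : IsCompact T := by
    have h1 : IsCompact (Set.univ.pi fun x => Metric.closedBall (0 : ℂ) (M x)) :=
      isCompact_univ_pi fun x => isCompact_closedBall _ _
    have h2 : IsClosed {f : X → ℂ | ∀ x z, dist z x < r x → dist (f z) (f x) ≤ c x * dist z x} := by
      simp only [Set.ofPred_forall]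
      refine isClosed_iInter fun x => isClosed_iInter fun z => isClosed_iInter fun _ => ?_
      exact isClosed_le ((continuous_apply z).dist (continuous_apply x)) continuous_const
    have := h1.inter_right h2
    convert this using 1
    ext f
    simp [hT]
  have hcont : ∀ x : X, Tendsto (fun z => c x * dist z x) (𝓝 x) (𝓝 0) := by
    intro x
    have : Continuous fun z => c x * dist z x := by fun_prop
    simpa using this.tendsto x
  have hTcont : ∀ f ∈ T, Continuous f := by
    intro f hf
    rw [continuous_iff_continuousAt]
    intro x
    rw [ContinuousAt, tendsto_iff_dist_tendsto_zero]
    refine squeeze_zero' (Eventually.of_forall fun _ => dist_nonneg) ?_ (hcont x)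
    filter_upwards [Metric.ball_mem_nhds x (hr x)] with z hz
    exact hf.2 x z hz
  set S : Set C(X, ℂ) := {f | (f : X → ℂ) ∈ T} with hS
  have hScomp : IsCompact S := by
    apply ArzelaAscoli.isCompact_of_equicontinuous
    · convert hTc using 1
      ext f
      constructor
      · rintro ⟨g, hg, rfl⟩; exact hg
      · intro hf; exact ⟨⟨f, hTcont f hf⟩, hf, rfl⟩
    · intro x
      rw [Metric.equicontinuousAt_iff_right]
      intro η hη
      filter_upwards [Metric.ball_mem_nhds x (hr x), (hcont x).eventually_lt_const hη] with z hz hz'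
      intro f
      rw [dist_comm]
      exact (f.2.2 x z hz).trans_lt hz'
  have hGT : ∀ j, G j ∈ T := fun j => ⟨fun x => by simpa using hM j x, hc j⟩
  obtain ⟨g, -, φ, hφ, hlim⟩ := hScomp.tendsto_subseq
    (x := fun j => (⟨G j, hTcont _ (hGT j)⟩ : C(X, ℂ))) (fun j => hGT j)
  refine ⟨φ, hφ, g, ?_⟩
  exact ContinuousMap.tendsto_iff_tendstoLocallyUniformly.1 hlim

lemma holo_limit {E : Type*} [NormedAddCommGroup E] [NormedSpace ℂ E] [ProperSpace E]
    {Ω : Set E} (hΩ : IsOpen Ω) {f : ℕ → E → ℂ} {g : E → ℂ} (hf : ∀ j, DifferentiableOn ℂ (f j) Ω)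
    (hlim : TendstoLocallyUniformlyOn f g atTop Ω) : DifferentiableOn ℂ g Ω := by
  intro x hx
  suffices h : ∃ g', HasFDerivAt g g' x from h.choose_spec.differentiableAt.differentiableWithinAt
  -- a ball on which the functions converge uniformly
  obtain ⟨δ, hδ, hδΩ, hunif⟩ : ∃ δ > 0, Metric.ball x (2 * δ) ⊆ Ω ∧
      ∀ η > 0, ∀ᶠ j in atTop, ∀ z ∈ Metric.ball x (2 * δ), dist (g z) (f j z) < η := by
    obtain ⟨ρ, hρ, hρΩ⟩ := Metric.isOpen_iff.1 hΩ x hx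
    have hsub : Metric.closedBall x (ρ / 2) ⊆ Ω :=
      (Metric.closedBall_subset_ball (by linarith)).trans hρΩ
    have hu := (tendstoLocallyUniformlyOn_iff_forall_isCompact hΩ).1 hlim _ hsub
      (isCompact_closedBall x (ρ / 2))
    rw [Metric.tendstoUniformlyOn_iff] at hu
    have hb : Metric.ball x (2 * (ρ / 4)) ⊆ Metric.closedBall x (ρ / 2) := by
      rw [show 2 * (ρ / 4) = ρ / 2 by ring]
      exact Metric.ball_subset_closedBall
    refine ⟨ρ / 4, by linarith, hb.trans hsub, fun η hη => ?_⟩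
    filter_upwards [hu η hη] with j hj z hz
    exact hj z (hb hz)
  have hs : ∀ y ∈ Metric.ball x δ, Metric.ball y δ ⊆ Metric.ball x (2 * δ) := by
    intro y hy
    apply Metric.ball_subset_ball'
    rw [Metric.mem_ball] at hy
    linarith
  have hC : UniformCauchySeqOn (fun j => fderiv ℂ (f j)) atTop (Metric.ball x δ) := by
    rw [Metric.uniformCauchySeqOn_iff]
    intro η hη
    obtain ⟨N, hN⟩ := eventually_atTop.1 (hunif (η * δ / 8) (by positivity))
    refine ⟨N, fun j hj k hk y hy => ?_⟩
    have hd : ∀ j, DifferentiableOn ℂ (f j) (Metric.ball y δ) :=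
      fun j => (hf j).mono ((hs y hy).trans hδΩ)
    have hda : ∀ j, DifferentiableAt ℂ (f j) y := fun j =>
      (hd j).differentiableAt (Metric.ball_mem_nhds y hδ)
    have hsm : ∀ z ∈ Metric.ball y δ, ‖f j z - f k z‖ ≤ η * δ / 4 := by
      intro z hz
      have h1 := hN j hj z (hs y hy hz)
      have h2 := hN k hk z (hs y hy hz)
      have h3 := dist_triangle_left (f j z) (f k z) (g z)
      rw [← dist_eq_norm]
      linarith
    have hfd := Complex.norm_fderiv_le_div_of_mapsTo_ball (f := fun z => f j z - f k z) (c := y)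
      (R₁ := δ) (R₂ := η * δ / 2) ((hd j).sub (hd k)) (by
        intro z hz
        rw [Metric.mem_closedBall, dist_eq_norm]
        have h1 := norm_sub_le (f j z - f k z) (f j y - f k y)
        have h2 := hsm z hz
        have h3 := hsm y (Metric.mem_ball_self hδ)
        linarith) hδ
    rw [fderiv_fun_sub (hda j) (hda k)] at hfd
    rw [dist_eq_norm]
    refine hfd.trans_lt ?_
    have : η * δ / 2 / δ = η / 2 := by field_simp
    rw [this]
    linarith
  have hex : ∀ y ∈ Metric.ball x δ, ∃ l, Tendsto (fun j => fderiv ℂ (f j) y) atTop (𝓝 l) := by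
    intro y hy
    exact cauchySeq_tendsto_of_complete (hC.cauchySeq hy)
  choose! g' hg' using hex
  have hT := hC.tendstoUniformlyOn_of_tendsto hg'
  refine ⟨g' x, hasFDerivAt_of_tendstoLocallyUniformlyOn (f := f) Metric.isOpen_ball
    hT.tendstoLocallyUniformlyOn ?_ ?_ (Metric.mem_ball_self hδ)⟩
  · intro j y hy
    exact ((hf j).differentiableAt (hΩ.mem_nhds
      (hδΩ (hs y hy (Metric.mem_ball_self hδ))))).hasFDerivAt
  · intro y hy
    exact hlim.tendsto_at (hδΩ (hs y hy (Metric.mem_ball_self hδ)))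

lemma montel {E : Type*} [NormedAddCommGroup E] [NormedSpace ℂ E] [FiniteDimensional ℂ E]
    {Ω : Set E} (hΩ : IsOpen Ω) {f : ℕ → E → ℂ} (hf : ∀ j, DifferentiableOn ℂ (f j) Ω)
    (hb : ∀ z ∈ Ω, ∃ r > 0, ∃ M : ℝ, Metric.ball z r ⊆ Ω ∧ ∀ j, ∀ w ∈ Metric.ball z r, ‖f j w‖ ≤ M) :
    ∃ φ : ℕ → ℕ, StrictMono φ ∧ ∃ g : E → ℂ, DifferentiableOn ℂ g Ω ∧
      TendstoLocallyUniformlyOn (fun j => f (φ j)) g atTop Ω := by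
  have : ProperSpace E := FiniteDimensional.proper ℂ E
  have : LocallyCompactSpace Ω := hΩ.locallyCompactSpace
  choose! r hr M hsub hM using hb
  obtain ⟨φ, hφ, g, hg⟩ := ascoli_seq (X := Ω) (fun j x => f j x) (fun x => M x)
    (fun x => 2 * M x / r x) (fun x => r x) (fun x => hr x x.2)
    (fun j x => hM x x.2 j x (Metric.mem_ball_self (hr x x.2)))
    (by
      intro j x z hz
      have := Complex.dist_le_div_mul_dist_of_mapsTo_ball (f := f j) (c := (x : E)) (z := (z : E))
        (R₁ := r x) (R₂ := 2 * M x) ((hf j).mono (hsub x x.2)) (by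
          intro w hw
          rw [Metric.mem_closedBall, dist_eq_norm]
          have h1 := norm_sub_le (f j w) (f j x)
          have h2 := hM x x.2 j w hw
          have h3 := hM x x.2 j x (Metric.mem_ball_self (hr x x.2))
          linarith) hz
      exact this)
  classical
  set g' : E → ℂ := fun z => if hz : z ∈ Ω then g ⟨z, hz⟩ else 0 with hg'
  have hlim : TendstoLocallyUniformlyOn (fun j => f (φ j)) g' atTop Ω := by
    rw [tendstoLocallyUniformlyOn_iff_tendstoLocallyUniformly_comp_coe]
    have e : g' ∘ ((↑) : Ω → E) = g := by
      funext x
      simp [hg']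
    rw [e]
    exact hg
  exact ⟨φ, hφ, g', holo_limit hΩ (fun j => hf _) hlim, hlim⟩

lemma clopen_prop {E : Type*} [PseudoMetricSpace E] {Ω : Set E} (hc : IsPreconnected Ω)
    (P : E → Prop)
    (hP : ∀ z ∈ Ω, ∃ r > 0, Metric.ball z r ⊆ Ω ∧ ∀ w ∈ Metric.ball z r, (P z ↔ P w))
    {z₀ : E} (hz₀ : z₀ ∈ Ω) (h0 : P z₀) : ∀ z ∈ Ω, P z := by
  set U : Set E := {z | z ∈ Ω ∧ P z} with hU
  have hUo : IsOpen U := by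
    rw [Metric.isOpen_iff]
    rintro z ⟨hz, hPz⟩
    obtain ⟨r, hr, hsub, h⟩ := hP z hz
    exact ⟨r, hr, fun w hw => ⟨hsub hw, (h w hw).1 hPz⟩⟩
  have := hc.subset_of_closure_inter_subset hUo ⟨z₀, hz₀, hz₀, h0⟩ (by
    rintro z ⟨hzc, hz⟩
    obtain ⟨r, hr, hsub, h⟩ := hP z hz
    obtain ⟨w, hw, hd⟩ := Metric.mem_closure_iff.1 hzc r hr
    exact ⟨hz, (h w (by rw [Metric.mem_ball, dist_comm]; exact hd)).2 hw.2⟩)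
  exact fun z hz => (this hz).2

lemma chordal_le_dist (a b : ℂ) : chordal a b ≤ dist a b := by
  unfold chordal
  apply div_le_self dist_nonneg
  have aux : ∀ c : ℂ, 1 ≤ Real.sqrt (1 + ‖c‖ ^ 2) := fun c =>
    Real.le_sqrt_of_sq_le (by nlinarith [sq_nonneg ‖c‖])
  nlinarith [aux a, aux b]

/-- Carathéodory's normality theorem in ℂⁿ. -/
theorem stmt8 {n : ℕ} {Ω : Set (Cn n)} (hΩ : IsOpen Ω) (hconn : IsConnected Ω)
    (F : Set (Cn n → ℂ)) (hhol : ∀ f ∈ F, DifferentiableOn ℂ f Ω)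
    (ε : ℝ) (hε : 0 < ε)
    (h : ∀ f ∈ F, ∃ a b : ℂ, a ≠ b ∧ (∀ z ∈ Ω, f z ≠ a ∧ f z ≠ b) ∧
      ε < chordalInf a * chordal a b * chordalInf b) :
    IsNormalFamily Ω F := by
  intro s hs
  have hnb : ∀ z ∈ Ω, ∃ r > 0, Metric.ball z r ⊆ Ω ∧ ∀ R : ℝ, ∃ C : ℝ, ∀ j,
      ∀ w ∈ Metric.ball z r,
        (‖s j z‖ ≤ R → ‖s j w‖ ≤ C) ∧ (‖s j w‖ ≤ R → ‖s j z‖ ≤ C) := by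
    intro z hz
    obtain ⟨ρ, hρ, hρΩ⟩ := Metric.isOpen_iff.1 hΩ z hz
    refine ⟨ρ / 16, by linarith, (Metric.ball_subset_ball (by linarith)).trans hρΩ, fun R => ?_⟩
    obtain ⟨C, hC⟩ := harnack (E := Cn n) hε R
    refine ⟨C, fun j w hw => ?_⟩
    obtain ⟨a, b, -, hom, hab⟩ := h (s j) (hs j)
    have hd := hhol (s j) (hs j)
    rw [Metric.mem_ball] at hw
    constructor
    · intro hR
      exact hC (s j) a b z ρ (hd.mono hρΩ) (fun y hy => hom y (hρΩ hy)) hab hR w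
        (by rw [Metric.mem_ball]; linarith)
    · intro hR
      have hsub : Metric.ball w (15 * ρ / 16) ⊆ Ω :=
        (Metric.ball_subset_ball' (by linarith)).trans hρΩ
      exact hC (s j) a b w (15 * ρ / 16) (hd.mono hsub) (fun y hy => hom y (hsub hy)) hab hR z
        (by rw [Metric.mem_ball, dist_comm]; linarith)
  obtain ⟨z₀, hz₀⟩ := hconn.nonempty
  by_cases hcase : ∃ R : ℝ, ∃ᶠ j in atTop, ‖s j z₀‖ ≤ R
  · obtain ⟨R, hR⟩ := hcase
    obtain ⟨ψ, hψ, hψR⟩ := extraction_of_frequently_atTop hR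
    have hall := clopen_prop hconn.isPreconnected (fun z => ∃ R : ℝ, ∀ j, ‖s (ψ j) z‖ ≤ R)
      (by
        intro z hz
        obtain ⟨r, hr, hsub, H⟩ := hnb z hz
        refine ⟨r, hr, hsub, fun w hw => ⟨?_, ?_⟩⟩
        · rintro ⟨R, hR⟩
          obtain ⟨C, hC⟩ := H R
          exact ⟨C, fun j => (hC _ w hw).1 (hR j)⟩
        · rintro ⟨R, hR⟩
          obtain ⟨C, hC⟩ := H R
          exact ⟨C, fun j => (hC _ w hw).2 (hR j)⟩) hz₀ ⟨R, hψR⟩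
    obtain ⟨φ, hφ, g, hg, hlim⟩ := montel hΩ (f := fun j => s (ψ j))
      (fun j => hhol _ (hs _)) (by
        intro z hz
        obtain ⟨r, hr, hsub, H⟩ := hnb z hz
        obtain ⟨R, hR⟩ := hall z hz
        obtain ⟨C, hC⟩ := H R
        exact ⟨r, hr, C, hsub, fun j w hw => (hC _ w hw).1 (hR j)⟩)
    refine ⟨fun j => ψ (φ j), hψ.comp hφ, Or.inl ⟨g, hg, ?_⟩⟩
    intro K hK hKc η hη
    have hu := (tendstoLocallyUniformlyOn_iff_forall_isCompact hΩ).1 hlim K hK hKc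
    rw [Metric.tendstoUniformlyOn_iff] at hu
    obtain ⟨N, hN⟩ := eventually_atTop.1 (hu η hη)
    refine ⟨N, fun j hj z hz => (chordal_le_dist _ _).trans_lt ?_⟩
    rw [dist_comm]
    exact hN j hj z hz
  · push Not at hcase
    have hall := clopen_prop hconn.isPreconnected
      (fun z => ∀ R : ℝ, ∀ᶠ j in atTop, R < ‖s j z‖)
      (by
        intro z hz
        obtain ⟨r, hr, hsub, H⟩ := hnb z hz
        refine ⟨r, hr, hsub, fun w hw => ⟨?_, ?_⟩⟩
        · intro hz R
          obtain ⟨C, hC⟩ := H R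
          filter_upwards [hz C] with j hj
          by_contra! hle
          exact absurd ((hC j w hw).2 hle) (not_le.2 hj)
        · intro hz R
          obtain ⟨C, hC⟩ := H R
          filter_upwards [hz C] with j hj
          by_contra! hle
          exact absurd ((hC j w hw).1 hle) (not_le.2 hj)) hz₀ hcase
    refine ⟨id, strictMono_id, Or.inr ?_⟩
    intro K hK hKc M
    suffices hev : ∀ᶠ j in atTop, ∀ z ∈ K, M < ‖s j z‖ from eventually_atTop.1 hev
    refine hKc.induction_on (p := fun K' => ∀ᶠ j in atTop, ∀ z ∈ K', M < ‖s j z‖)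
      (by simp) ?_ ?_ ?_
    · intro A B hAB hB
      filter_upwards [hB] with j hj z hz using hj z (hAB hz)
    · intro A B hA hB
      filter_upwards [hA, hB] with j hj hj' z hz
      exact hz.elim (hj z) (hj' z)
    · intro z hz
      obtain ⟨r, hr, -, H⟩ := hnb z (hK hz)
      obtain ⟨C, hC⟩ := H M
      refine ⟨Metric.ball z r, mem_nhdsWithin_of_mem_nhds (Metric.ball_mem_nhds z hr), ?_⟩
      filter_upwards [hall z (hK hz) C] with j hj w hw
      by_contra! hle
      exact absurd ((hC j w hw).2 hle) (not_le.2 hj)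
end

section
/- Nevanlinna's theorem on totally ramified values: a nonconstant entire function g : ℂ → ℂ has at most two finite totally ramified values, where a ∈ ℂ is totally ramified for g if every root of the equation g(λ) = a has multiplicity at least 2 (in particular, omitted values are totally ramified). -/
open Filter Topology

lemma local_quot (u : ℂ → ℂ) (x : ℂ) (hu : AnalyticAt ℂ u x) (h0 : u x = 0) (h1 : deriv u x = 0)
    (hn : ¬ ∀ᶠ z in 𝓝 x, u z = 0) :
    ∃ ψ : ℂ → ℂ, AnalyticAt ℂ ψ x ∧ ∀ᶠ z in 𝓝 x, (deriv u z) ^ 2 = ψ z * u z := by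
  obtain ⟨m, h, hh, hx, he⟩ := (AnalyticAt.exists_eventuallyEq_pow_smul_nonzero_iff hu).2 hn
  have hd : ∀ᶠ z in 𝓝 x, deriv u z = m * (z - x) ^ (m - 1) * h z + (z - x) ^ m * deriv h z := by
    filter_upwards [he.eventually_nhds, hh.eventually_analyticAt] with z hz hz2
    have : u =ᶠ[𝓝 z] fun z => (z - x) ^ m * h z := hz
    rw [this.deriv_eq]
    have e1 : HasDerivAt (fun z : ℂ => (z - x) ^ m) (m * (z - x) ^ (m - 1) * 1) z :=
      ((hasDerivAt_id z).sub_const x).pow m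
    rw [(e1.fun_mul hz2.differentiableAt.hasDerivAt).deriv]
    ring
  rcases m with _ | _ | k
  · have := he.self_of_nhds
    simp [h0] at this
    exact absurd this.symm hx
  · have := hd.self_of_nhds
    simp [h1] at this
    exact absurd this.symm hx
  · refine ⟨fun z => (z - x) ^ k * ((k + 2) * h z + (z - x) * deriv h z) ^ 2 / h z, ?_, ?_⟩
    · have := hh.deriv
      fun_prop (disch := assumption)
    · filter_upwards [he, hd, hh.continuousAt.eventually_ne hx] with z hz1 hz2 hz3
      rw [hz1, hz2]
      push_cast
      simp only [smul_eq_mul]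
      field_simp
      ring

lemma exists_F (g : ℂ → ℂ) (hg : Differentiable ℂ g) (hnc : ¬ ∃ c : ℂ, ∀ z, g z = c)
    (a b c : ℂ) (hab : a ≠ b) (hac : a ≠ c) (hbc : b ≠ c)
    (ha : ∀ w : ℂ, g w = a → deriv g w = 0) (hb : ∀ w : ℂ, g w = b → deriv g w = 0)
    (hc : ∀ w : ℂ, g w = c → deriv g w = 0) :
    ∃ F : ℂ → ℂ, Differentiable ℂ F ∧
      ∀ z, (deriv g z) ^ 2 = F z * ((g z - a) * (g z - b) * (g z - c)) := by
  have hA : ∀ z, AnalyticAt ℂ g z := fun z => hg.analyticAt z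
  have hne : ∀ x t : ℂ, ∀ᶠ z in 𝓝[≠] x, g z ≠ t := by
    intro x t
    rcases (hA x).eventually_eq_or_eventually_ne (analyticAt_const (v := t)) with h | h
    · exfalso
      apply hnc
      refine ⟨t, fun z => ?_⟩
      have := AnalyticOnNhd.eq_of_eventuallyEq (f := g) (g := fun _ => t) (z₀ := x)
        (fun z _ => hA z) (fun z _ => analyticAt_const) h
      exact congrFun this z
    · exact h
  have hloc : ∀ x a, g x = a → deriv g x = 0 →
      ∃ ψ : ℂ → ℂ, AnalyticAt ℂ ψ x ∧ ∀ᶠ z in 𝓝 x, (deriv g z) ^ 2 = ψ z * (g z - a) := by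
    intro x a hx hd
    have := local_quot (fun z => g z - a) x (by have := hA x; fun_prop) (by simp [hx])
      (by simpa using hd) ?_
    · simpa using this
    · intro h
      obtain ⟨z, hz1, hz2⟩ := ((h.filter_mono nhdsWithin_le_nhds).and (hne x a)).exists
      exact hz2 (sub_eq_zero.1 hz1)
  set q : ℂ → ℂ := fun z => (deriv g z) ^ 2 / ((g z - a) * (g z - b) * (g z - c)) with hq
  have hqm : MeromorphicOn q Set.univ := by
    intro x _
    have h1 := (hA x).meromorphicAt
    have h2 := (hA x).deriv.meromorphicAt
    rw [hq]
    fun_prop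
  have key : ∀ x, ∃ φ : ℂ → ℂ, AnalyticAt ℂ φ x ∧ ∀ᶠ z in 𝓝[≠] x, q z = φ z := by
    intro x
    have h1 := hA x
    have h2 := (hA x).deriv
    by_cases h : g x = a
    · obtain ⟨ψ, hψ, he⟩ := hloc x a h (ha x h)
      refine ⟨fun z => ψ z / ((g z - b) * (g z - c)), ?_, ?_⟩
      · have : (g x - b) * (g x - c) ≠ 0 := by
          rw [h]; exact mul_ne_zero (sub_ne_zero.2 hab) (sub_ne_zero.2 hac)
        fun_prop (disch := assumption)
      · filter_upwards [he.filter_mono nhdsWithin_le_nhds, hne x a, hne x b, hne x c] with z e1 e2 e3 e4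
        have := sub_ne_zero.2 e2
        have := sub_ne_zero.2 e3
        have := sub_ne_zero.2 e4
        simp only [hq]; rw [e1]; field_simp
    by_cases h' : g x = b
    · obtain ⟨ψ, hψ, he⟩ := hloc x b h' (hb x h')
      refine ⟨fun z => ψ z / ((g z - a) * (g z - c)), ?_, ?_⟩
      · have : (g x - a) * (g x - c) ≠ 0 := by
          rw [h']; exact mul_ne_zero (sub_ne_zero.2 hab.symm) (sub_ne_zero.2 hbc)
        fun_prop (disch := assumption)
      · filter_upwards [he.filter_mono nhdsWithin_le_nhds, hne x a, hne x b, hne x c] with z e1 e2 e3 e4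
        have := sub_ne_zero.2 e2
        have := sub_ne_zero.2 e3
        have := sub_ne_zero.2 e4
        simp only [hq]; rw [e1]; field_simp
    by_cases h'' : g x = c
    · obtain ⟨ψ, hψ, he⟩ := hloc x c h'' (hc x h'')
      refine ⟨fun z => ψ z / ((g z - a) * (g z - b)), ?_, ?_⟩
      · have : (g x - a) * (g x - b) ≠ 0 := by
          rw [h'']; exact mul_ne_zero (sub_ne_zero.2 hac.symm) (sub_ne_zero.2 hbc.symm)
        fun_prop (disch := assumption)
      · filter_upwards [he.filter_mono nhdsWithin_le_nhds, hne x a, hne x b, hne x c] with z e1 e2 e3 e4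
        have := sub_ne_zero.2 e2
        have := sub_ne_zero.2 e3
        have := sub_ne_zero.2 e4
        simp only [hq]; rw [e1]; field_simp
    · refine ⟨q, ?_, Eventually.of_forall fun _ => rfl⟩
      have : (g x - a) * (g x - b) * (g x - c) ≠ 0 :=
        mul_ne_zero (mul_ne_zero (sub_ne_zero.2 h) (sub_ne_zero.2 h')) (sub_ne_zero.2 h'')
      rw [hq]
      fun_prop (disch := assumption)
  have hFA : ∀ x, AnalyticAt ℂ (toMeromorphicNFOn q Set.univ) x := by
    intro x
    have h1 := meromorphicNFOn_toMeromorphicNFOn q Set.univ (Set.mem_univ x)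
    rw [← h1.meromorphicOrderAt_nonneg_iff_analyticAt,
      meromorphicOrderAt_toMeromorphicNFOn hqm (Set.mem_univ x)]
    obtain ⟨φ, hφ, he⟩ := key x
    rw [meromorphicOrderAt_congr he]
    exact hφ.meromorphicOrderAt_nonneg
  refine ⟨toMeromorphicNFOn q Set.univ, fun x => (hFA x).differentiableAt, fun x => ?_⟩
  have hE : ∀ᶠ z in 𝓝[≠] x, (deriv g z) ^ 2 =
      toMeromorphicNFOn q Set.univ z * ((g z - a) * (g z - b) * (g z - c)) := by
    filter_upwards [hqm.toMeromorphicNFOn_eq_self_on_nhdsNE (Set.mem_univ x),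
      hne x a, hne x b, hne x c] with z e1 e2 e3 e4
    have := sub_ne_zero.2 e2
    have := sub_ne_zero.2 e3
    have := sub_ne_zero.2 e4
    rw [e1]; simp only [hq]; field_simp
  have c1 : ContinuousAt (fun z => (deriv g z) ^ 2) x := ((hA x).deriv.continuousAt).pow 2
  have c2 : ContinuousAt (fun z => toMeromorphicNFOn q Set.univ z *
      ((g z - a) * (g z - b) * (g z - c))) x := by
    have h1 := (hA x).continuousAt
    have h2 := (hFA x).continuousAt
    fun_prop
  exact tendsto_nhds_unique_of_eventuallyEq (c1.tendsto.mono_left nhdsWithin_le_nhds)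
    (c2.tendsto.mono_left nhdsWithin_le_nhds) hE

/-- differentiated identity -/
lemma second_id (g F : ℂ → ℂ) (hg : Differentiable ℂ g) (hF : Differentiable ℂ F)
    (hnc : ¬ ∃ c : ℂ, ∀ z, g z = c) (a b c : ℂ)
    (h : ∀ z, (deriv g z) ^ 2 = F z * ((g z - a) * (g z - b) * (g z - c))) (z : ℂ) :
    2 * deriv (deriv g) z * F z = deriv F z * deriv g z + F z ^ 2 *
      ((g z - b) * (g z - c) + (g z - a) * (g z - c) + (g z - a) * (g z - b)) := by
  have hA : ∀ z, AnalyticAt ℂ g z := fun z => hg.analyticAt z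
  have hAF : ∀ z, AnalyticAt ℂ F z := fun z => hF.analyticAt z
  have hprod : ∀ z, deriv g z * (2 * deriv (deriv g) z * F z - (deriv F z * deriv g z + F z ^ 2 *
      ((g z - b) * (g z - c) + (g z - a) * (g z - c) + (g z - a) * (g z - b)))) = 0 := by
    intro z
    have e1 : HasDerivAt (fun z => (deriv g z) ^ 2) (2 * deriv g z * deriv (deriv g) z) z := by
      simpa using ((hA z).deriv.differentiableAt.hasDerivAt).fun_pow 2
    have eg : HasDerivAt g (deriv g z) z := (hg z).hasDerivAt
    have e2 := (hF z).hasDerivAt.mul (((eg.sub_const a).mul (eg.sub_const b)).mul (eg.sub_const c))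
    have e3 : (fun z => (deriv g z) ^ 2) =
      (F * (((fun x => g x - a) * fun x => g x - b) * fun x => g x - c)) := by
      funext z; exact h z
    rw [← e3] at e2
    have e4 := e1.unique e2
    simp only [Pi.mul_apply] at e4
    linear_combination F z * e4 - deriv F z * h z
  have hne : ∃ᶠ w in 𝓝[≠] z, deriv g w ≠ 0 := by
    intro hcon
    simp only [not_not] at hcon
    rcases (hA z).deriv.eventually_eq_zero_or_eventually_ne_zero with h | h
    · have := AnalyticOnNhd.eq_of_eventuallyEq (f := deriv g) (g := fun _ => 0) (z₀ := z)
        (fun z _ => (hA z).deriv) (fun z _ => analyticAt_const) h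
      apply hnc
      exact ⟨g 0, fun w => is_const_of_deriv_eq_zero hg (fun w => congrFun this w) w 0⟩
    · obtain ⟨w, h1, h2⟩ := (hcon.and h).exists
      exact h2 h1
  have := (hA z).deriv
  have := (hA z).deriv.deriv
  have := hA z
  have := hAF z
  have := (hAF z).deriv
  have hAn : AnalyticAt ℂ (fun z => 2 * deriv (deriv g) z * F z - (deriv F z * deriv g z + F z ^ 2 *
      ((g z - b) * (g z - c) + (g z - a) * (g z - c) + (g z - a) * (g z - b)))) z := by
    fun_prop
  have hfz := hAn.frequently_zero_iff_eventually_zero.1 (hne.mono fun w hw =>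
    (mul_eq_zero.1 (hprod w)).resolve_left hw)
  exact sub_eq_zero.1 hfz.self_of_nhds

lemma log_bound (G : ℂ → ℂ) (hG : Differentiable ℂ G) (r : ℝ) (hr : 0 < r)
    (h1 : ∀ z ∈ Metric.ball (0:ℂ) r, 1 < ‖G z‖) :
    ‖deriv G 0‖ ≤ ‖G 0‖ * (2 * Real.log ‖G 0‖ / r) := by
  have hne : ∀ z ∈ Metric.ball (0:ℂ) r, G z ≠ 0 := fun z hz h => by
    have := h1 z hz; rw [h] at this; norm_num at this
  have m0 : (0:ℂ) ∈ Metric.ball (0:ℂ) r := Metric.mem_ball_self hr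
  have hdd : Differentiable ℂ (deriv G) := fun z => (hG.analyticAt z).deriv.differentiableAt
  have hq : DifferentiableOn ℂ (fun z => deriv G z / G z) (Metric.ball (0:ℂ) r) :=
    hdd.differentiableOn.fun_div hG.differentiableOn hne
  obtain ⟨h, h0, hh⟩ := hq.isExactOn_ball.with_val_at 0 (Complex.log (G 0))
  have hder : ∀ z ∈ Metric.ball (0:ℂ) r, HasDerivAt (fun z => G z * Complex.exp (-h z)) 0 z := by
    intro z hz
    have := (hG z).hasDerivAt.fun_mul (hh z hz).fun_neg.cexp
    refine this.congr_deriv ?_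
    have e : G z * (deriv G z / G z) = deriv G z := mul_div_cancel₀ _ (hne z hz)
    linear_combination (-Complex.exp (-h z)) * e
  have hconst : ∀ z ∈ Metric.ball (0:ℂ) r, G z * Complex.exp (-h z) = 1 := by
    intro z hz
    have := (convex_ball (0:ℂ) r).norm_image_sub_le_of_norm_hasDerivWithin_le (C := 0)
      (fun z hz => (hder z hz).hasDerivWithinAt) (by simp) m0 hz
    simp only [zero_mul, norm_le_zero_iff] at this
    rw [sub_eq_zero.1 this, h0, Complex.exp_neg, Complex.exp_log (hne 0 m0)]
    exact mul_inv_cancel₀ (hne 0 m0)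
  have hre : ∀ z ∈ Metric.ball (0:ℂ) r, (h z).re = Real.log ‖G z‖ := by
    intro z hz
    have := hconst z hz
    rw [Complex.exp_neg, mul_inv_eq_one₀ (Complex.exp_ne_zero _)] at this
    rw [this, Complex.norm_exp, Real.log_exp]
  have hpos : ∀ z ∈ Metric.ball (0:ℂ) r, 0 < (h z).re := fun z hz => by
    rw [hre z hz]; exact Real.log_pos (h1 z hz)
  set w := h 0 with hw
  have hw0 : 0 < w.re := hpos 0 m0
  have hsum : ∀ z ∈ Metric.ball (0:ℂ) r, h z + (starRingEnd ℂ) w ≠ 0 := by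
    intro z hz hc
    have := congrArg Complex.re hc
    simp at this
    linarith [hpos z hz]
  have hcay : ∀ z ∈ Metric.ball (0:ℂ) r,
      HasDerivAt (fun z => (h z - w) / (h z + (starRingEnd ℂ) w))
      ((deriv G z / G z * (h z + (starRingEnd ℂ) w) - (h z - w) * (deriv G z / G z)) /
        (h z + (starRingEnd ℂ) w) ^ 2) z := fun z hz =>
    ((hh z hz).sub_const w).fun_div ((hh z hz).add_const _) (hsum z hz)
  have hmaps : Set.MapsTo (fun z => (h z - w) / (h z + (starRingEnd ℂ) w)) (Metric.ball (0:ℂ) r)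
      (Metric.ball ((fun z => (h z - w) / (h z + (starRingEnd ℂ) w)) 0) 1) := by
    intro z hz
    simp only [← hw, sub_self, zero_div, mem_ball_zero_iff, norm_div]
    rw [div_lt_one (norm_pos_iff.2 (hsum z hz))]
    apply lt_of_pow_lt_pow_left₀ 2 (norm_nonneg _)
    rw [Complex.sq_norm, Complex.sq_norm, Complex.normSq_apply, Complex.normSq_apply]
    simp
    nlinarith [mul_pos hw0 (hpos z hz)]
  have := Complex.norm_deriv_le_div_of_mapsTo_ball
    (fun z hz => (hcay z hz).differentiableAt.differentiableWithinAt)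
    (hmaps.mono_right Metric.ball_subset_closedBall) hr
  rw [(hcay 0 m0).deriv, ← hw] at this
  have e : w + (starRingEnd ℂ) w = ((2 * w.re : ℝ) : ℂ) := by
    rw [Complex.add_conj]
  rw [sub_self, zero_mul, sub_zero, e] at this
  rw [hre 0 m0] at this hw0
  have hG0 : 0 < ‖G 0‖ := norm_pos_iff.2 (hne 0 m0)
  have e2 : ‖deriv G 0 / G 0 * ((2 * Real.log ‖G 0‖ : ℝ) : ℂ) / ((2 * Real.log ‖G 0‖ : ℝ) : ℂ) ^ 2‖
     = ‖deriv G 0‖ / ‖G 0‖ / (2 * Real.log ‖G 0‖) := by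
    rw [norm_div, norm_mul, norm_pow, norm_div, Complex.norm_of_nonneg (by positivity)]
    field_simp
  rw [e2, div_le_div_iff₀ (by positivity) hr, div_mul_eq_mul_div, div_le_iff₀ hG0] at this
  rw [mul_div_assoc', le_div_iff₀ hr]
  linarith

lemma lip_bound (G : ℂ → ℂ) (hG : Differentiable ℂ G) (D : ℝ) (hD : 0 ≤ D) (r : ℝ)
    (h : ∀ z ∈ Metric.ball (0:ℂ) r, ‖deriv G z‖ ^ 8 ≤ D ^ 8 * (1 + ‖G z‖ ^ 2) ^ 5)
    (z : ℂ) (hz : z ∈ Metric.ball (0:ℂ) r) :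
    (1 + ‖G z‖ ^ 2) ^ (-(1/8) : ℝ) ≤ (1 + ‖G 0‖ ^ 2) ^ (-(1/8) : ℝ) + D / 4 * ‖z‖ := by
  have hder : ∀ t : ℝ, HasDerivAt (fun t : ℝ => (1 + ‖G (t * z)‖ ^ 2) ^ (-(1/8) : ℝ))
      ((2 * inner ℝ (G (t * z)) (deriv G (t * z) * z)) * (-(1/8) : ℝ) *
        (1 + ‖G (t * z)‖ ^ 2) ^ ((-(1/8) : ℝ) - 1)) t := by
    intro t
    have e0 : HasDerivAt (fun t : ℝ => (t : ℂ) * z) z t := by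
      simpa using (Complex.ofRealCLM.hasDerivAt (x := t)).mul_const z
    have e1 : HasDerivAt (fun t : ℝ => G (t * z)) (deriv G (t * z) * z) t :=
      (hG (t * z)).hasDerivAt.comp t e0
    exact (e1.norm_sq.const_add 1).rpow_const (Or.inl (by positivity))
  have hb : ∀ t ∈ Set.Ico (0:ℝ) 1, ‖(2 * inner ℝ (G (t * z)) (deriv G (t * z) * z)) * (-(1/8) : ℝ) *
        (1 + ‖G (t * z)‖ ^ 2) ^ ((-(1/8) : ℝ) - 1)‖ ≤ D / 4 * ‖z‖ := by
    intro t ht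
    have hm : (t : ℂ) * z ∈ Metric.ball (0:ℂ) r := by
      rw [mem_ball_zero_iff] at hz ⊢
      rw [norm_mul, Complex.norm_of_nonneg ht.1]
      nlinarith [norm_nonneg z, ht.2]
    have h8 := h _ hm
    set S := 1 + ‖G (t * z)‖ ^ 2 with hS
    have hS0 : 0 < S := by positivity
    have hd : ‖deriv G (t * z)‖ ≤ D * S ^ (5/8 : ℝ) := by
      apply le_of_pow_le_pow_left₀ (n := 8) (by norm_num) (by positivity)
      rw [mul_pow, ← Real.rpow_natCast (S ^ (5/8 : ℝ)), ← Real.rpow_mul hS0.le]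
      norm_num
      exact h8
    have hg : ‖G (t * z)‖ ≤ S ^ (1/2 : ℝ) := by
      rw [← Real.sqrt_eq_rpow]
      apply Real.le_sqrt_of_sq_le
      linarith
    have hi : |inner ℝ (G (t * z)) (deriv G (t * z) * z)| ≤
        S ^ (1/2 : ℝ) * (D * S ^ (5/8 : ℝ) * ‖z‖) := by
      refine (abs_real_inner_le_norm _ _).trans ?_
      rw [norm_mul]
      gcongr
    rw [Real.norm_eq_abs, abs_mul, abs_mul, abs_mul, abs_of_pos (Real.rpow_pos_of_pos hS0 _)]
    have e1 : |(-(1/8) : ℝ)| = 1/8 := by norm_num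
    have e2 : |(2 : ℝ)| = 2 := by norm_num
    rw [e1, e2]
    have e3 : S ^ (1/2 : ℝ) * S ^ (5/8 : ℝ) * S ^ ((-(1/8) : ℝ) - 1) = 1 := by
      rw [← Real.rpow_add hS0, ← Real.rpow_add hS0]; norm_num
    calc _ ≤ 2 * (S ^ (1/2 : ℝ) * (D * S ^ (5/8 : ℝ) * ‖z‖)) * (1/8) * S ^ ((-(1/8) : ℝ) - 1) := by
          gcongr
      _ = D / 4 * ‖z‖ * (S ^ (1/2 : ℝ) * S ^ (5/8 : ℝ) * S ^ ((-(1/8) : ℝ) - 1)) := by ring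
      _ = _ := by rw [e3, mul_one]
  have := norm_image_sub_le_of_norm_deriv_le_segment_01'
    (fun t _ => (hder t).hasDerivWithinAt) hb
  simp only [Complex.ofReal_one, one_mul, Complex.ofReal_zero, zero_mul] at this
  linarith [le_of_abs_le this]

set_option maxHeartbeats 1000000 in
lemma case_A (a b c : ℂ) : ∃ L : ℝ, 0 < L ∧ ∀ G F : ℂ → ℂ, Differentiable ℂ G →
    (∀ z, (deriv G z) ^ 2 = F z * ((G z - a) * (G z - b) * (G z - c))) →
    ‖F 0‖ ^ 4 * (1 + ‖G 0‖ ^ 2) = 1 →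
    (∀ z ∈ Metric.ball (0:ℂ) 1, ‖F z‖ ^ 4 * (1 + ‖G z‖ ^ 2) ≤ 256) → ‖G 0‖ ≤ L := by
  set K : ℝ := 1 + ‖a‖ + ‖b‖ + ‖c‖ with hK
  have hK1 : 1 ≤ K := by rw [hK]; linarith [norm_nonneg a, norm_nonneg b, norm_nonneg c]
  have hev : ∀ᶠ x : ℝ in atTop, 256 ≤ x ∧ 2 * K ≤ x ∧
      Real.log x ^ 8 ≤ 1 / ((8 * K ^ 2) ^ 8 * 2 ^ 13) * x := by
    have h1 := (Real.isLittleO_pow_log_id_atTop (n := 8)).def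
      (show 0 < 1 / ((8 * K ^ 2) ^ 8 * 2 ^ 13) by positivity)
    filter_upwards [h1, eventually_ge_atTop 256, eventually_ge_atTop (2 * K)] with x e1 e2 e3
    refine ⟨e2, e3, ?_⟩
    rw [id, Real.norm_of_nonneg (by linarith : 0 ≤ x)] at e1
    exact (le_abs_self _).trans e1
  obtain ⟨L, hL⟩ := eventually_atTop.1 hev
  refine ⟨max L 1, by positivity, ?_⟩
  intro G F hG hGF h0 hb
  by_contra hcon
  push Not at hcon
  obtain ⟨x1, x2, x3⟩ := hL ‖G 0‖ ((le_max_left _ _).trans hcon.le)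
  have hGF8 : ∀ z, ‖deriv G z‖ ^ 8 = ‖F z‖ ^ 4 * (‖G z - a‖ * ‖G z - b‖ * ‖G z - c‖) ^ 4 := by
    intro z
    have := congrArg (fun w => ‖w‖ ^ 4) (hGF z)
    simp only [norm_pow, norm_mul] at this
    rw [← mul_pow, ← this]; ring
  have hpa : ∀ w t : ℂ, 1 + ‖t‖ ≤ K → ‖w - t‖ ^ 2 ≤ K ^ 2 * (1 + ‖w‖ ^ 2) := by
    intro w t ht
    have h1 : ‖w - t‖ ≤ ‖w‖ + ‖t‖ := norm_sub_le _ _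
    have h2 : ‖w - t‖ ^ 2 ≤ (‖w‖ + ‖t‖) ^ 2 := by gcongr
    have h3 : (1 + ‖t‖) ^ 2 ≤ K ^ 2 := by gcongr
    nlinarith [norm_nonneg w, norm_nonneg t, sq_nonneg (‖w‖ - 1), sq_nonneg (‖w‖ * ‖t‖ ),
      mul_le_mul_of_nonneg_right h3 (show 0 ≤ 1 + ‖w‖ ^ 2 by positivity),
      mul_nonneg (norm_nonneg t) (sq_nonneg (‖w‖ - 1)), mul_nonneg (norm_nonneg t) (sq_nonneg (‖w‖))]
  have ka : 1 + ‖a‖ ≤ K := by rw [hK]; linarith [norm_nonneg a, norm_nonneg b, norm_nonneg c]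
  have kb : 1 + ‖b‖ ≤ K := by rw [hK]; linarith [norm_nonneg a, norm_nonneg b, norm_nonneg c]
  have kc : 1 + ‖c‖ ≤ K := by rw [hK]; linarith [norm_nonneg a, norm_nonneg b, norm_nonneg c]
  have hD : ∀ z ∈ Metric.ball (0:ℂ) (1 / (2 * K ^ 2)),
      ‖deriv G z‖ ^ 8 ≤ (2 * K ^ 2) ^ 8 * (1 + ‖G z‖ ^ 2) ^ 5 := by
    intro z hz
    have hz1 : z ∈ Metric.ball (0:ℂ) 1 := by
      refine Metric.ball_subset_ball ?_ hz
      rw [div_le_one (by positivity)]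
      nlinarith
    rw [hGF8]
    clear_value K
    set S := 1 + ‖G z‖ ^ 2 with hS
    have hS0 : 0 < S := by positivity
    have e1 : (‖G z - a‖ * ‖G z - b‖ * ‖G z - c‖) ^ 4 ≤ K ^ 12 * S ^ 6 := by
      calc _ = (‖G z - a‖ ^ 2) ^ 2 * (‖G z - b‖ ^ 2) ^ 2 * (‖G z - c‖ ^ 2) ^ 2 := by ring
        _ ≤ (K ^ 2 * S) ^ 2 * (K ^ 2 * S) ^ 2 * (K ^ 2 * S) ^ 2 := by
          gcongr
          · exact hpa _ _ ka
          · exact hpa _ _ kb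
          · exact hpa _ _ kc
        _ = _ := by ring
    calc _ ≤ ‖F z‖ ^ 4 * (K ^ 12 * S ^ 6) := by gcongr
      _ = (‖F z‖ ^ 4 * S) * (K ^ 12 * S ^ 5) := by ring
      _ ≤ 256 * (K ^ 12 * S ^ 5) := by gcongr; exact hb z hz1
      _ ≤ 256 * (K ^ 16 * S ^ 5) := by gcongr; norm_num
      _ = _ := by ring
  have hlip := lip_bound G hG (2 * K ^ 2) (by positivity) _ hD
  have hq0 : (1 + ‖G 0‖ ^ 2) ^ (-(1/8) : ℝ) ≤ 1 / 4 := by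
    have : (1 / 4 : ℝ) = (4 ^ 8 : ℝ) ^ (-(1/8) : ℝ) := by
      rw [← Real.rpow_natCast, ← Real.rpow_mul (by norm_num)]; norm_num
    rw [this, Real.rpow_le_rpow_iff_of_neg (by positivity) (by positivity) (by norm_num)]
    nlinarith
  have hbig : ∀ z ∈ Metric.ball (0:ℂ) (1 / (2 * K ^ 2)), 1 < ‖G z‖ := by
    intro z hz
    have h1 := hlip z hz
    rw [mem_ball_zero_iff, lt_div_iff₀ (by positivity)] at hz
    have h2 : (1 + ‖G z‖ ^ 2) ^ (-(1/8) : ℝ) ≤ 1 / 2 := by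
      nlinarith
    have : (1 / 2 : ℝ) = (2 ^ 8 : ℝ) ^ (-(1/8) : ℝ) := by
      rw [← Real.rpow_natCast, ← Real.rpow_mul (by norm_num)]; norm_num
    rw [this, Real.rpow_le_rpow_iff_of_neg (by positivity) (by positivity) (by norm_num)] at h2
    nlinarith [norm_nonneg (G z)]
  have hlog := log_bound G hG _ (by positivity) hbig
  set x := ‖G 0‖ with hx
  have hl0 : 0 ≤ Real.log x := Real.log_nonneg (by linarith)
  have hup : ‖deriv G 0‖ ^ 8 ≤ x ^ 9 / 2 ^ 13 := by
    calc ‖deriv G 0‖ ^ 8 ≤ (x * (2 * Real.log x / (1 / (2 * K ^ 2)))) ^ 8 := by gcongr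
      _ = x ^ 8 * (4 * K ^ 2) ^ 8 * Real.log x ^ 8 := by field_simp; ring
      _ ≤ x ^ 8 * (8 * K ^ 2) ^ 8 * (1 / ((8 * K ^ 2) ^ 8 * 2 ^ 13) * x) := by gcongr; norm_num
      _ = _ := by field_simp
  have hpl : ∀ t : ℂ, 1 + ‖t‖ ≤ K → x / 2 ≤ ‖G 0 - t‖ := by
    intro t ht
    have := norm_sub_norm_le (G 0) t
    linarith
  have hlow : (x / 2) ^ 12 ≤ ‖deriv G 0‖ ^ 8 * (1 + x ^ 2) := by
    rw [hGF8]
    have e1 : (x / 2) ^ 12 ≤ (‖G 0 - a‖ * ‖G 0 - b‖ * ‖G 0 - c‖) ^ 4 := by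
      calc (x / 2) ^ 12 = ((x / 2) * (x / 2) * (x / 2)) ^ 4 := by ring
        _ ≤ _ := by
          gcongr
          · exact hpl _ ka
          · exact hpl _ kb
          · exact hpl _ kc
    calc _ ≤ _ := e1
      _ = (‖F 0‖ ^ 4 * (1 + x ^ 2)) * (‖G 0 - a‖ * ‖G 0 - b‖ * ‖G 0 - c‖) ^ 4 := by rw [h0]; ring
      _ = _ := by ring
  have hfin : (x / 2) ^ 12 ≤ x ^ 9 / 2 ^ 13 * (2 * x ^ 2) :=
    hlow.trans (by gcongr; nlinarith)
  have hx0 : 0 < x := by linarith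
  have : x ^ 11 * x ≤ x ^ 11 * 1 := by
    have e : x ^ 11 * x = 2 ^ 12 * (x / 2) ^ 12 := by ring
    rw [e]; linarith
  have := le_of_mul_le_mul_left this (by positivity)
  linarith

lemma case_B (a b c : ℂ) (hab : a ≠ b) (hac : a ≠ c) (hbc : b ≠ c) (L : ℝ) (hL : 0 < L) :
    ∃ N : ℝ, 1 < N ∧ ∀ G F : ℂ → ℂ, Differentiable ℂ G → Differentiable ℂ F →
    (∀ z, (deriv G z) ^ 2 = F z * ((G z - a) * (G z - b) * (G z - c))) →
    (∀ z, 2 * deriv (deriv G) z * F z = deriv F z * deriv G z + F z ^ 2 *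
      ((G z - b) * (G z - c) + (G z - a) * (G z - c) + (G z - a) * (G z - b))) →
    ‖F 0‖ ^ 4 * (1 + ‖G 0‖ ^ 2) = 1 →
    (∀ z ∈ Metric.closedBall (0:ℂ) N, ‖F z‖ ^ 4 * (1 + ‖G z‖ ^ 2) ≤ 256) → ‖G 0‖ ≤ L → False := by
  obtain ⟨η, hη, hmin⟩ : ∃ η : ℝ, 0 < η ∧ ∀ w : ℂ, ‖w‖ ≤ L →
      η ≤ ‖(w - a) * (w - b) * (w - c)‖ +
        ‖(w - b) * (w - c) + (w - a) * (w - c) + (w - a) * (w - b)‖ := by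
    obtain ⟨w0, _, hw0⟩ := (isCompact_closedBall (0:ℂ) L).exists_isMinOn
      ⟨0, Metric.mem_closedBall_self hL.le⟩
      (f := fun w => ‖(w - a) * (w - b) * (w - c)‖ +
        ‖(w - b) * (w - c) + (w - a) * (w - c) + (w - a) * (w - b)‖)
      (by fun_prop)
    refine ⟨_, ?_, fun w hw => hw0 (mem_closedBall_zero_iff.2 hw)⟩
    by_contra hcon
    have h1 := norm_nonneg ((w0 - a) * (w0 - b) * (w0 - c))
    have h2 := norm_nonneg ((w0 - b) * (w0 - c) + (w0 - a) * (w0 - c) + (w0 - a) * (w0 - b))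
    have e1 : (w0 - a) * (w0 - b) * (w0 - c) = 0 := norm_le_zero_iff.1 (by linarith)
    have e2 : (w0 - b) * (w0 - c) + (w0 - a) * (w0 - c) + (w0 - a) * (w0 - b) = 0 :=
      norm_le_zero_iff.1 (by linarith)
    have hab' := sub_ne_zero.2 hab
    have hac' := sub_ne_zero.2 hac
    have hbc' := sub_ne_zero.2 hbc
    rcases mul_eq_zero.1 e1 with e | e
    · rcases mul_eq_zero.1 e with e | e
      · have : w0 = a := sub_eq_zero.1 e
        subst this
        simp [hab', hac'] at e2
      · have : w0 = b := sub_eq_zero.1 e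
        subst this
        simp [sub_ne_zero.2 hab.symm, hbc'] at e2
    · have : w0 = c := sub_eq_zero.1 e
      subst this
      simp [sub_ne_zero.2 hac.symm, sub_ne_zero.2 hbc.symm] at e2
  set k : ℝ := 1 / (1 + L) with hk
  have hk0 : 0 < k := by positivity
  have hk1 : k ≤ 1 := by rw [hk, div_le_one (by positivity)]; linarith
  set B : ℝ := 64 / k ^ 2 with hB
  have hB0 : 0 < B := by positivity
  set C1 : ℝ := 4 * B ^ 2 * 16 ^ 2 / k ^ 3 + (32 * B * 16 ^ 2 / k ^ 2 + 16 * B * 16 / k) / k ^ 2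
    with hC1
  have hC10 : 0 < C1 := by positivity
  refine ⟨2 + C1 / η, by have := div_pos hC10 hη; linarith, ?_⟩
  set N : ℝ := 2 + C1 / η with hN
  have hN2 : 2 < N := by have := div_pos hC10 hη; linarith
  have hCN : C1 / N ^ 2 < η := by
    rw [div_lt_iff₀ (by positivity)]
    have : C1 < η * N := by
      rw [hN, mul_add, mul_div_cancel₀ _ hη.ne']; linarith
    nlinarith
  intro G F hG hF h1 h2 h0 hb hGL
  have hdG : Differentiable ℂ (deriv G) := fun z => (hG.analyticAt z).deriv.differentiableAt
  have hF0 : k ≤ ‖F 0‖ := by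
    apply le_of_pow_le_pow_left₀ (n := 4) (by norm_num) (by positivity)
    have e : ‖F 0‖ ^ 4 = 1 / (1 + ‖G 0‖ ^ 2) := by
      field_simp; linarith
    rw [e, hk, div_pow, one_pow]
    apply one_div_le_one_div_of_le (by positivity)
    have : ‖G 0‖ ^ 2 ≤ L ^ 2 := by gcongr
    nlinarith [mul_pos hL hL, pow_pos hL 3, pow_pos hL 4]
  have hF4 : ∀ z ∈ Metric.closedBall (0:ℂ) N, ‖F z‖ ≤ 4 := by
    intro z hz
    apply le_of_pow_le_pow_left₀ (n := 4) (by norm_num) (by positivity)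
    have := hb z hz
    have : 0 ≤ ‖F z‖ ^ 4 * ‖G z‖ ^ 2 := by positivity
    linarith
  have cauchy : ∀ (f : ℂ → ℂ) (z : ℂ) (R r M : ℝ), Differentiable ℂ f → 0 < r → ‖z‖ + r ≤ R →
      (∀ w ∈ Metric.closedBall (0:ℂ) R, ‖f w‖ ≤ M) → ‖deriv f z‖ ≤ M / r := by
    intro f z R r M hf hr hR hM
    apply Complex.norm_deriv_le_of_forall_mem_sphere_norm_le hr hf.diffContOnCl
    intro w hw
    apply hM
    rw [mem_sphere_iff_norm] at hw
    rw [mem_closedBall_zero_iff]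
    have : ‖w‖ ≤ ‖z‖ + ‖w - z‖ := by
      calc ‖w‖ = ‖z + (w - z)‖ := by congr 1; ring
        _ ≤ _ := norm_add_le _ _
    linarith
  have hF' : ∀ z ∈ Metric.closedBall (0:ℂ) (N / 2), ‖deriv F z‖ ≤ 4 / (N / 2) := by
    intro z hz
    rw [mem_closedBall_zero_iff] at hz
    exact cauchy F z N (N / 2) 4 hF (by positivity) (by linarith) hF4
  set R : ℝ := k * N / 16 with hR
  have hR0 : 0 < R := by positivity
  have hRN : R ≤ N / 2 := by rw [hR]; nlinarith
  have hFlow : ∀ z ∈ Metric.closedBall (0:ℂ) R, k / 2 ≤ ‖F z‖ := by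
    intro z hz
    have hz2 := Metric.closedBall_subset_closedBall hRN hz
    have := (convex_closedBall (0:ℂ) (N / 2)).norm_image_sub_le_of_norm_deriv_le
      (fun z _ => hF z) hF' (Metric.mem_closedBall_self (by positivity)) hz2
    rw [mem_closedBall_zero_iff] at hz
    rw [sub_zero] at this
    have e : 4 / (N / 2) * ‖z‖ ≤ k / 2 := by
      calc _ ≤ 4 / (N / 2) * R := by gcongr
        _ = k / 2 := by rw [hR]; field_simp; norm_num
    have := norm_sub_norm_le (F 0) (F z)
    rw [norm_sub_rev] at this
    linarith
  have hGB : ∀ z ∈ Metric.closedBall (0:ℂ) R, ‖G z‖ ≤ B := by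
    intro z hz
    have e1 := hFlow z hz
    have e2 := hb z (Metric.closedBall_subset_closedBall (by linarith) hz)
    have e3 : (k / 2) ^ 4 ≤ ‖F z‖ ^ 4 := by gcongr
    have e4 : (k / 2) ^ 4 * (1 + ‖G z‖ ^ 2) ≤ 256 :=
      le_trans (by gcongr) e2
    apply le_of_pow_le_pow_left₀ (n := 2) (by norm_num) (by positivity)
    rw [hB, div_pow, le_div_iff₀ (by positivity)]
    have : 0 < k ^ 4 := by positivity
    nlinarith
  have hG' : ∀ z ∈ Metric.closedBall (0:ℂ) (R / 2), ‖deriv G z‖ ≤ B / (R / 2) := by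
    intro z hz
    rw [mem_closedBall_zero_iff] at hz
    exact cauchy G z R (R / 2) B hG (by positivity) (by linarith) hGB
  have hG'' : ‖deriv (deriv G) 0‖ ≤ B / (R / 2) / (R / 2) :=
    cauchy (deriv G) 0 (R / 2) (R / 2) _ hdG (by positivity) (by simp) hG'
  have hG'0 := hG' 0 (Metric.mem_closedBall_self (by positivity))
  have hF'0 := hF' 0 (Metric.mem_closedBall_self (by positivity))
  have hF40 := hF4 0 (Metric.mem_closedBall_self (by positivity))
  have hm := hmin (G 0) hGL
  set p := ‖(G 0 - a) * (G 0 - b) * (G 0 - c)‖ with hp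
  set p' := ‖(G 0 - b) * (G 0 - c) + (G 0 - a) * (G 0 - c) + (G 0 - a) * (G 0 - b)‖ with hp'
  have b1 : p ≤ (B / (R / 2)) ^ 2 / k := by
    rw [le_div_iff₀ hk0]
    have := congrArg norm (h1 0)
    rw [norm_pow, norm_mul, ← hp] at this
    calc p * k ≤ p * ‖F 0‖ := by gcongr
      _ = ‖deriv G 0‖ ^ 2 := by rw [this]; ring
      _ ≤ _ := by gcongr
  have b2 : p' ≤ (2 * (B / (R / 2) / (R / 2)) * 4 + 4 / (N / 2) * (B / (R / 2))) / k ^ 2 := by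
    rw [le_div_iff₀ (by positivity)]
    have e : F 0 ^ 2 * ((G 0 - b) * (G 0 - c) + (G 0 - a) * (G 0 - c) + (G 0 - a) * (G 0 - b))
        = 2 * deriv (deriv G) 0 * F 0 - deriv F 0 * deriv G 0 := by
      rw [h2 0]; ring
    have e' := congrArg norm e
    rw [norm_mul, norm_pow, ← hp'] at e'
    calc p' * k ^ 2 ≤ p' * ‖F 0‖ ^ 2 := by gcongr
      _ = ‖2 * deriv (deriv G) 0 * F 0 - deriv F 0 * deriv G 0‖ := by rw [← e']; ring
      _ ≤ ‖2 * deriv (deriv G) 0 * F 0‖ + ‖deriv F 0 * deriv G 0‖ := norm_sub_le _ _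
      _ = 2 * ‖deriv (deriv G) 0‖ * ‖F 0‖ + ‖deriv F 0‖ * ‖deriv G 0‖ := by
        simp only [norm_mul, Complex.norm_ofNat]
      _ ≤ _ := by gcongr
  have b3 : (B / (R / 2)) ^ 2 / k +
      (2 * (B / (R / 2) / (R / 2)) * 4 + 4 / (N / 2) * (B / (R / 2))) / k ^ 2 = C1 / N ^ 2 := by
    have hN0 : N ≠ 0 := by positivity
    rw [hR, hC1]
    clear_value N B k
    field_simp
    ring
  linarith

lemma rescale (g F : ℂ → ℂ) (hg : Differentiable ℂ g) (hF : Differentiable ℂ F)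
    (z1 : ℂ) (hz1 : F z1 ≠ 0) (N : ℝ) (hN : 0 < N) :
    ∃ (z0 : ℂ) (ρ : ℝ), 0 < ρ ∧ ρ ^ 8 * (‖F z0‖ ^ 4 * (1 + ‖g z0‖ ^ 2)) = 1 ∧
      ∀ z ∈ Metric.closedBall z0 (ρ * N), ρ ^ 8 * (‖F z‖ ^ 4 * (1 + ‖g z‖ ^ 2)) ≤ 256 := by
  set ν : ℂ → ℝ := fun z => ‖F z‖ ^ 4 * (1 + ‖g z‖ ^ 2) with hν
  have hν0 : ∀ z, 0 ≤ ν z := fun z => by simp only [hν]; positivity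
  have hν1 : 0 < ν z1 := by
    have := norm_pos_iff.2 hz1
    simp only [hν]; positivity
  have hνc : Continuous ν := by
    have := hg.continuous
    have := hF.continuous
    simp only [hν]; fun_prop
  obtain ⟨R, hR0, hR⟩ : ∃ R : ℝ, 0 < R ∧ (2 * N) ^ 8 ≤ R ^ 8 * ν z1 := by
    have : Tendsto (fun R : ℝ => R ^ 8 * ν z1) atTop atTop :=
      (tendsto_pow_atTop (by norm_num)).atTop_mul_const hν1
    obtain ⟨R, h1, h2⟩ := ((this.eventually_ge_atTop ((2 * N) ^ 8)).and
      (eventually_gt_atTop 0)).exists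
    exact ⟨R, h2, h1⟩
  obtain ⟨z0, hz0, hmax⟩ := (isCompact_closedBall z1 R).exists_isMaxOn
    ⟨z1, Metric.mem_closedBall_self hR0.le⟩ (f := fun z => (R - dist z z1) ^ 8 * ν z)
    (by fun_prop)
  have hV : (2 * N) ^ 8 ≤ (R - dist z0 z1) ^ 8 * ν z0 := by
    have := hmax (Metric.mem_closedBall_self hR0.le : z1 ∈ _)
    simp only [Set.mem_ofPred_eq, dist_self, sub_zero] at this
    linarith
  set d := R - dist z0 z1 with hd
  have hd0 : 0 ≤ d := by rw [Metric.mem_closedBall] at hz0; linarith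
  have hVpos : 0 < d ^ 8 * ν z0 := lt_of_lt_of_le (by positivity) hV
  have hνz0 : 0 < ν z0 := by
    rcases (hν0 z0).eq_or_lt with h | h
    · rw [← h] at hVpos; simp at hVpos
    · exact h
  set ρ : ℝ := (ν z0) ^ (-(1/8) : ℝ) with hρ
  have hρ0 : 0 < ρ := Real.rpow_pos_of_pos hνz0 _
  have hρ8 : ρ ^ 8 * ν z0 = 1 := by
    rw [hρ, ← Real.rpow_natCast, ← Real.rpow_mul hνz0.le]
    norm_num
    rw [Real.rpow_neg_one]
    exact inv_mul_cancel₀ hνz0.ne'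
  refine ⟨z0, ρ, hρ0, hρ8, fun z hz => ?_⟩
  have hρN : ρ * (2 * N) ≤ d := by
    apply le_of_pow_le_pow_left₀ (n := 8) (by norm_num) hd0
    calc (ρ * (2 * N)) ^ 8 = ρ ^ 8 * (2 * N) ^ 8 := by ring
      _ ≤ ρ ^ 8 * (d ^ 8 * ν z0) := by gcongr
      _ = d ^ 8 * (ρ ^ 8 * ν z0) := by ring
      _ = _ := by rw [hρ8, mul_one]
  rw [Metric.mem_closedBall] at hz
  have hdz : d / 2 ≤ R - dist z z1 := by
    have := dist_triangle z z0 z1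
    linarith
  have hdpos : 0 < d := lt_of_lt_of_le (by positivity) hρN
  have hm := hmax (show z ∈ Metric.closedBall z1 R by rw [Metric.mem_closedBall]; linarith)
  simp only [Set.mem_ofPred_eq, ← hd] at hm
  have h3 : (d / 2) ^ 8 * ν z ≤ d ^ 8 * ν z0 := by
    refine le_trans ?_ hm
    have := hν0 z
    gcongr
  have h4 : ν z ≤ 256 * ν z0 := by
    have : d ^ 8 * ν z ≤ d ^ 8 * (256 * ν z0) := by
      have e : (d / 2) ^ 8 = d ^ 8 / 256 := by ring
      rw [e] at h3; linarith
    exact le_of_mul_le_mul_left this (by positivity)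
  calc ρ ^ 8 * ν z ≤ ρ ^ 8 * (256 * ν z0) := by gcongr
    _ = 256 * (ρ ^ 8 * ν z0) := by ring
    _ = 256 := by rw [hρ8, mul_one]

/-- Nevanlinna: a nonconstant entire function has at most two finite totally
ramified values. -/
theorem stmt11 (g : ℂ → ℂ) (hg : Differentiable ℂ g) (hnc : ¬ ∃ c : ℂ, ∀ z, g z = c) :
    ¬ ∃ a b c : ℂ, a ≠ b ∧ a ≠ c ∧ b ≠ c ∧
      (∀ w : ℂ, g w = a → deriv g w = 0) ∧
      (∀ w : ℂ, g w = b → deriv g w = 0) ∧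
      (∀ w : ℂ, g w = c → deriv g w = 0) := by
  rintro ⟨a, b, c, hab, hac, hbc, ha, hb, hc⟩
  obtain ⟨F, hF, h1⟩ := exists_F g hg hnc a b c hab hac hbc ha hb hc
  have h2 := second_id g F hg hF hnc a b c h1
  obtain ⟨L, hL, hA⟩ := case_A a b c
  obtain ⟨N, hN, hB⟩ := case_B a b c hab hac hbc L hL
  obtain ⟨z1, hz1⟩ : ∃ z, F z ≠ 0 := by
    by_contra! hcon
    apply hnc
    refine ⟨g 0, fun w => is_const_of_deriv_eq_zero hg (fun w => ?_) w 0⟩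
    have := h1 w
    rw [hcon w, zero_mul] at this
    exact pow_eq_zero_iff (by norm_num) |>.1 this
  obtain ⟨z0, ρ, hρ, e0, e1⟩ := rescale g F hg hF z1 hz1 N (by linarith)
  have haff : ∀ z : ℂ, HasDerivAt (fun z : ℂ => z0 + ρ * z) (ρ : ℂ) z := fun z => by
    simpa using ((hasDerivAt_id z).const_mul (ρ : ℂ)).const_add z0
  have hdg : Differentiable ℂ (deriv g) := fun z => (hg.analyticAt z).deriv.differentiableAt
  set G : ℂ → ℂ := fun z => g (z0 + ρ * z) with hGdef
  set H : ℂ → ℂ := fun z => ρ ^ 2 * F (z0 + ρ * z) with hHdef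
  have dG : ∀ z, HasDerivAt G (deriv g (z0 + ρ * z) * ρ) z := fun z =>
    (hg (z0 + ρ * z)).hasDerivAt.comp z (haff z)
  have dH : ∀ z, HasDerivAt H (ρ ^ 2 * (deriv F (z0 + ρ * z) * ρ)) z := fun z =>
    ((hF (z0 + ρ * z)).hasDerivAt.comp z (haff z)).const_mul _
  have dG1 : deriv G = fun z => deriv g (z0 + ρ * z) * ρ := funext fun z => (dG z).deriv
  have ddG : ∀ z, deriv (deriv G) z = deriv (deriv g) (z0 + ρ * z) * ρ * ρ := by
    intro z
    rw [dG1]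
    exact (((hdg (z0 + ρ * z)).hasDerivAt.comp z (haff z)).mul_const (ρ : ℂ)).deriv
  have hG : Differentiable ℂ G := fun z => (dG z).differentiableAt
  have hH : Differentiable ℂ H := fun z => (dH z).differentiableAt
  have i1 : ∀ z, (deriv G z) ^ 2 = H z * ((G z - a) * (G z - b) * (G z - c)) := by
    intro z
    rw [dG1]
    simp only [hGdef, hHdef]
    linear_combination (ρ : ℂ) ^ 2 * h1 (z0 + ρ * z)
  have i2 : ∀ z, 2 * deriv (deriv G) z * H z = deriv H z * deriv G z + H z ^ 2 *
      ((G z - b) * (G z - c) + (G z - a) * (G z - c) + (G z - a) * (G z - b)) := by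
    intro z
    rw [ddG, (dH z).deriv, (dG z).deriv]
    simp only [hGdef, hHdef]
    linear_combination (ρ : ℂ) ^ 4 * h2 (z0 + ρ * z)
  have hn : ∀ z, ‖H z‖ ^ 4 * (1 + ‖G z‖ ^ 2) =
      ρ ^ 8 * (‖F (z0 + ρ * z)‖ ^ 4 * (1 + ‖g (z0 + ρ * z)‖ ^ 2)) := by
    intro z
    simp only [hGdef, hHdef, norm_mul, norm_pow, Complex.norm_of_nonneg hρ.le]
    ring
  have j0 : ‖H 0‖ ^ 4 * (1 + ‖G 0‖ ^ 2) = 1 := by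
    rw [hn]; simpa using e0
  have j1 : ∀ z ∈ Metric.closedBall (0:ℂ) N, ‖H z‖ ^ 4 * (1 + ‖G z‖ ^ 2) ≤ 256 := by
    intro z hz
    rw [hn]
    apply e1
    rw [mem_closedBall_zero_iff] at hz
    rw [mem_closedBall_iff_norm, add_sub_cancel_left, norm_mul, Complex.norm_of_nonneg hρ.le]
    gcongr
  exact hB G H hG hH i1 i2 j0 j1 (hA G H hG i1 j0 fun z hz => j1 z
    (Metric.closedBall_subset_closedBall hN.le (Metric.ball_subset_closedBall hz)))
end
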